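/- arXiv:2505.14475 — 3 statements merged into one kernel-verified Lean document; each statement's English description precedes it below -/
import Mathlib

section
/- Let p ≥ 1 and let V : ℤ → ℝ be p-periodic. Let E_1, …, E_p : [0, π/p] → ℝ be continuous functions that are real-analytic on the open interval (0, π/p), such that for every k ∈ [0, π/p] one has E_1(k) ≤ E_2(k) ≤ ⋯ ≤ E_p(k) and (E_1(k), …, E_p(k)) is the full list, with multiplicity, of eigenvalues of the Floquet matrix H(k). Then there exists δ > 0 such that |E_j''(k)| + |E_j'''(k)| ≥ δ for every j ∈ {1, …, p} and every k ∈ (0, π/p). -/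
/-!
The characteristic polynomial of `H(k)` is `Q - 2 cos (p k)` for a fixed real polynomial `Q`, so
`Q(E_j(k)) = 2 cos (p k)`. Let `ν` be the density of states and `Θ(z) = i ∫ log (z - t) dν(t)` for
`Im z > 0`. Then `Re Θ ∈ [-π, 0]`, and Jensen's formula gives `Im Θ(z) = |Im w| / p` whenever
`Q(z) = 2 cos w`. Hence `Θ` maps the upper half-plane into itself and, near `x = E_j(k₀)`, it
inverts, up to a real constant, the complexification of `E_j` (reflected at `k₀` if `E_j` is
decreasing).

Let `G = Θ - const` with `G(x) = 0`, and `d = |E_j'(k₀)|`. Julia's lemma says that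
`-1/G(z) + d/(z - x)` has non-negative imaginary part. At the point `z` with `G(z) = i t` this
imaginary part is asymptotic to `t (3 E''² - 2 E' E''') / (12 d²)` as `t → 0`, and a boundary
Harnack inequality bounds the coefficient from below by the imaginary part at a point high up in the
half-plane, where `Θ(z)` is about `i log |z|` and `d / (z - x)` is negligible. This gives
`3 E''² + 2 e |E'''| ≥ c d³`, since also `d ≤ e`, with `c > 0` independent of `j` and `k₀`. Where
`d` is small, the identities `Q'(E) E' = -2p sin (p k)` and
`Q''(E) E'² + Q'(E) E'' = -2p² cos (p k)` bound `|E''|` from below directly.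
-/

open scoped ENNReal Real

/-- The off-diagonal (hopping) part of the Floquet matrix: `S i j = 1` if `j ≡ i+1` cyclically
(with the Floquet phase `e^{ipk}` on the corner entry in position `(p,1)`), `0` otherwise. -/
noncomputable def floquetHopping (p : ℕ) (k : ℝ) : Matrix (Fin p) (Fin p) ℂ :=
  Matrix.of fun i j =>
    if ((i : ℕ) + 1) % p = (j : ℕ) then
      (if (i : ℕ) + 1 = p then Complex.exp (Complex.I * p * k) else 1)
    else 0

/-- The Floquet matrix `H(k)`: diagonal entries `V(1), …, V(p)`, entries `1` on the off
diagonals, and corner entries `e^{∓ipk}` in positions `(1,p)` and `(p,1)`. -/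
noncomputable def floquetMatrix (p : ℕ) (V : ℤ → ℝ) (k : ℝ) : Matrix (Fin p) (Fin p) ℂ :=
  Matrix.diagonal (fun i : Fin p => ((V ((i : ℕ) + 1) : ℝ) : ℂ)) + floquetHopping p k
    + (floquetHopping p k).conjTranspose

section Discriminant

open Matrix

variable {R : Type*} [CommRing R]

section Determinants

variable {m : Type*} [DecidableEq m] [Fintype m]

theorem det_add_single (A : Matrix m m R) (i j : m) (u : R) :
    (A + single i j u).det = A.det + u * A.adjugate j i := by
  have h : A + single i j u = A.updateRow i (A i + u • Pi.single j 1) := by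
    ext a b
    simp only [Matrix.add_apply, single_apply, updateRow_apply, Pi.add_apply, Pi.smul_apply,
      Pi.single_apply, smul_eq_mul]
    grind
  rw [h, det_updateRow_add, det_updateRow_smul, adjugate_apply, updateRow_eq_self]

theorem exists_adjugate_add_single (A : Matrix m m R) (i j : m) :
    ∃ q, ∀ v, (A + single i j v).adjugate i j = A.adjugate i j + v * q := by
  rcases eq_or_ne i j with rfl | hij
  · refine ⟨0, fun v => ?_⟩
    have h : (A + single i i v).updateRow i (Pi.single i 1) = A.updateRow i (Pi.single i 1) := by
      ext a b
      simp only [Matrix.add_apply, single_apply, updateRow_apply]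
      grind
    simp [adjugate_apply, h]
  · refine ⟨(A.updateRow j (Pi.single i 1)).adjugate j i, fun v => ?_⟩
    have h : (A + single i j v).updateRow j (Pi.single i 1)
        = A.updateRow j (Pi.single i 1) + single i j v := by
      ext a b
      simp only [Matrix.add_apply, single_apply, updateRow_apply]
      grind
    rw [adjugate_apply, adjugate_apply, h, det_add_single]

theorem exists_det_add_single_add_single (A : Matrix m m R) (i j : m) :
    ∃ q, ∀ v u, (A + single i j v + single j i u).det
      = A.det + v * A.adjugate j i + u * A.adjugate i j + u * v * q := by
  obtain ⟨q, hq⟩ := exists_adjugate_add_single A i j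
  refine ⟨q, fun v u => ?_⟩
  rw [det_add_single, det_add_single, hq]
  ring

end Determinants

theorem adjugate_last_zero_of_upperHessenberg {n : ℕ} (A : Matrix (Fin (n + 1)) (Fin (n + 1)) R)
    (hA : ∀ i j : Fin (n + 1), (j : ℕ) + 1 < i → A i j = 0) :
    A.adjugate (Fin.last n) 0 = ∏ i : Fin n, -A i.succ i.castSucc := by
  have hminor : (A.submatrix Fin.succ Fin.castSucc).det = ∏ i : Fin n, A i.succ i.castSucc :=
    det_of_isUpperTriangular fun i j (hij : j < i) => hA _ _ (by simpa using hij)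
  simp [adjugate_fin_succ_eq_det_submatrix, Fin.succAbove_last, Fin.succAbove_zero, hminor,
    Finset.prod_neg]

theorem adjugate_zero_last_of_lowerHessenberg {n : ℕ} (A : Matrix (Fin (n + 1)) (Fin (n + 1)) R)
    (hA : ∀ i j : Fin (n + 1), (i : ℕ) + 1 < j → A i j = 0) :
    A.adjugate 0 (Fin.last n) = ∏ i : Fin n, -A i.castSucc i.succ := by
  simpa [← adjugate_transpose] using
    adjugate_last_zero_of_upperHessenberg Aᵀ fun i j hij => hA j i hij

/-- The restriction of `H_V` to the sites `1, …, n`: the Floquet matrix without its corner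
entries. -/
noncomputable def dirichletMatrix (n : ℕ) (V : ℤ → ℝ) : Matrix (Fin n) (Fin n) ℂ :=
  Matrix.of fun i j =>
    (if i = j then (V ((i : ℕ) + 1) : ℂ) else 0) + (if (i : ℕ) + 1 = j then 1 else 0)
      + (if (j : ℕ) + 1 = i then 1 else 0)

theorem floquetHopping_succ_apply (n : ℕ) (k : ℝ) (i j : Fin (n + 1)) :
    floquetHopping (n + 1) k i j = (if (i : ℕ) + 1 = j then 1 else 0)
      + (if Fin.last n = i ∧ 0 = j then Complex.exp (Complex.I * (n + 1 : ℕ) * k) else 0) := by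
  simp only [floquetHopping, of_apply, Fin.ext_iff, Fin.val_last, Fin.val_zero]
  rcases eq_or_ne (i : ℕ) n with hi | hi
  · have : ¬n + 1 = (j : ℕ) := by lia
    simp [hi, this]
  · rw [Nat.mod_eq_of_lt (by lia)]
    simp [hi, Ne.symm hi]

theorem floquetMatrix_succ (n : ℕ) (V : ℤ → ℝ) (k : ℝ) :
    floquetMatrix (n + 1) V k = dirichletMatrix (n + 1) V
      + single 0 (Fin.last n) (Complex.exp (-(Complex.I * (n + 1 : ℕ) * k)))
      + single (Fin.last n) 0 (Complex.exp (Complex.I * (n + 1 : ℕ) * k)) := by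
  ext i j
  have hexp : star (Complex.exp (Complex.I * (n + 1 : ℕ) * k))
      = Complex.exp (-(Complex.I * (n + 1 : ℕ) * k)) := by
    simp [← Complex.exp_conj]
  simp only [floquetMatrix, dirichletMatrix, Matrix.add_apply, conjTranspose_apply,
    floquetHopping_succ_apply, diagonal_apply, of_apply, single_apply, star_add, apply_ite star,
    hexp, star_one, star_zero, and_comm (a := Fin.last n = j)]
  ring

theorem charmatrix_dirichletMatrix_adjugate (n : ℕ) (V : ℤ → ℝ) :
    (dirichletMatrix (n + 1) V).charmatrix.adjugate (Fin.last n) 0 = 1 ∧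
      (dirichletMatrix (n + 1) V).charmatrix.adjugate 0 (Fin.last n) = 1 := by
  constructor
  · rw [adjugate_last_zero_of_upperHessenberg]
    · refine Finset.prod_eq_one fun i _ => ?_
      simp [dirichletMatrix, Fin.ext_iff, add_assoc]
    · intro i j hij
      simp [dirichletMatrix, Fin.ext_iff, show (i : ℕ) ≠ j by lia,
        show ¬(i : ℕ) + 1 = j by lia, hij.ne]
  · rw [adjugate_zero_last_of_lowerHessenberg]
    · refine Finset.prod_eq_one fun i _ => ?_
      simp [dirichletMatrix, Fin.ext_iff, add_assoc]
    · intro i j hij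
      simp [dirichletMatrix, Fin.ext_iff, show (i : ℕ) ≠ j by lia,
        show ¬(j : ℕ) + 1 = i by lia, hij.ne]

open Polynomial in
theorem exists_charpoly_floquetMatrix_eq {p : ℕ} (hp : 1 ≤ p) (V : ℤ → ℝ) :
    ∃ Q : ℂ[X], ∀ k : ℝ, (floquetMatrix p V k).charpoly = Q - C (2 * Complex.cos (p * k)) := by
  obtain ⟨n, rfl⟩ := Nat.exists_eq_add_of_le' hp
  set D := (dirichletMatrix (n + 1) V).charmatrix with hD
  obtain ⟨q, hq⟩ := exists_det_add_single_add_single D 0 (Fin.last n)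
  refine ⟨D.det + q, fun k => ?_⟩
  set θ : ℂ := Complex.I * (n + 1 : ℕ) * k with hθ
  have hchar : (floquetMatrix (n + 1) V k).charmatrix
      = D + single 0 (Fin.last n) (-C (Complex.exp (-θ)))
        + single (Fin.last n) 0 (-C (Complex.exp θ)) := by
    ext1 i j
    simp only [hD, floquetMatrix_succ, charmatrix_apply, Matrix.add_apply, single_apply, map_add,
      apply_ite C, map_zero, ← hθ]
    split_ifs <;> ring
  have hprod : C (Complex.exp θ) * C (Complex.exp (-θ)) = 1 := by
    rw [← C_mul, ← Complex.exp_add, add_neg_cancel, Complex.exp_zero, C_1]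
  have hsum : 2 * Complex.cos ((n + 1 : ℕ) * k) = Complex.exp θ + Complex.exp (-θ) := by
    rw [Complex.two_cos, hθ]
    ring_nf
  rw [Matrix.charpoly, hchar, hq, (charmatrix_dirichletMatrix_adjugate n V).1,
    (charmatrix_dirichletMatrix_adjugate n V).2, hsum, C_add]
  linear_combination q * hprod

end Discriminant

open Filter Topology Complex Set
open scoped ComplexConjugate

local notation "ℍₒ" => UpperHalfPlane.upperHalfPlaneSet

section HalfPlane

theorem normSq_sub_conj (a b : ℂ) :
    normSq (a - conj b) = normSq (a - b) + 4 * (a.im * b.im) := by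
  simp only [normSq_apply, sub_re, sub_im, conj_re, conj_im]
  ring

theorem sub_conj_ne_zero {a b : ℂ} (ha : a ∈ ℍₒ) (hb : b ∈ ℍₒ) : a - conj b ≠ 0 := by
  rw [← normSq_pos, normSq_sub_conj]
  have hpos : 0 < a.im * b.im := mul_pos ha hb
  linarith [normSq_nonneg (a - b)]

theorem sub_ofReal_ne_zero {z : ℂ} (hz : z ∈ ℍₒ) (x : ℝ) : z - x ≠ 0 := fun h => by
  have hz : 0 < z.im := hz
  simp [sub_eq_zero.mp h] at hz

/-- The Cayley transform of the upper half-plane onto the unit disc that takes `w` to `0`. -/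
noncomputable def cayley (w z : ℂ) : ℂ := (z - w) / (z - conj w)

/-- The inverse of `cayley w`. -/
noncomputable def cayleyInv (w ξ : ℂ) : ℂ := (w - conj w * ξ) / (1 - ξ)

theorem cayley_mem_ball {w z : ℂ} (hw : w ∈ ℍₒ) (hz : z ∈ ℍₒ) :
    cayley w z ∈ Metric.ball 0 1 := by
  have hpos : 0 < z.im * w.im := mul_pos hz hw
  rw [mem_ball_zero_iff, cayley, norm_div, div_lt_one (norm_pos_iff.mpr (sub_conj_ne_zero hz hw)),
    ← sq_lt_sq₀ (norm_nonneg _) (norm_nonneg _), ← normSq_eq_norm_sq, ← normSq_eq_norm_sq,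
    normSq_sub_conj]
  linarith

theorem one_sub_ne_zero_of_mem_ball {ξ : ℂ} (hξ : ξ ∈ Metric.ball 0 1) : 1 - ξ ≠ 0 := fun h => by
  simp [← sub_eq_zero.mp h] at hξ

theorem cayleyInv_mem {w ξ : ℂ} (hw : w ∈ ℍₒ) (hξ : ξ ∈ Metric.ball 0 1) :
    cayleyInv w ξ ∈ ℍₒ := by
  have him : (cayleyInv w ξ).im = w.im * (1 - normSq ξ) / normSq (1 - ξ) := by
    simp only [cayleyInv, div_im, normSq_apply, sub_re, sub_im, mul_re, mul_im, conj_re, conj_im,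
      one_re, one_im]
    ring
  have hlt : normSq ξ < 1 := by
    rw [normSq_eq_norm_sq]
    exact pow_lt_one₀ (norm_nonneg _) (mem_ball_zero_iff.mp hξ) two_ne_zero
  have hden := normSq_pos.mpr (one_sub_ne_zero_of_mem_ball hξ)
  change 0 < (cayleyInv w ξ).im
  rw [him]
  exact div_pos (mul_pos hw (sub_pos.mpr hlt)) hden

theorem cayleyInv_cayley {w z : ℂ} (hw : w ∈ ℍₒ) (hz : z ∈ ℍₒ) :
    cayleyInv w (cayley w z) = z := by
  have hzw := sub_conj_ne_zero hz hw
  have hww := sub_conj_ne_zero hw hw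
  have hden : 1 - cayley w z = (w - conj w) / (z - conj w) := by
    rw [cayley]
    field_simp
    ring
  rw [cayleyInv, hden, cayley, div_eq_iff (div_ne_zero hww hzw)]
  field_simp
  ring

theorem differentiableOn_cayleyInv (w : ℂ) :
    DifferentiableOn ℂ (cayleyInv w) (Metric.ball 0 1) := by
  refine DifferentiableOn.div ?_ ?_ fun ξ => one_sub_ne_zero_of_mem_ball <;> fun_prop

theorem norm_cayley_le_norm_cayley {f : ℂ → ℂ} (hf : DifferentiableOn ℂ f ℍₒ)
    (him : MapsTo f ℍₒ ℍₒ) {z w : ℂ} (hz : z ∈ ℍₒ) (hw : w ∈ ℍₒ) :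
    ‖cayley (f w) (f z)‖ ≤ ‖cayley w z‖ := by
  set h : ℂ → ℂ := fun ξ => cayley (f w) (f (cayleyInv w ξ)) with hh
  have hfc : DifferentiableOn ℂ (fun ξ => f (cayleyInv w ξ)) (Metric.ball 0 1) :=
    hf.comp (differentiableOn_cayleyInv w) fun ξ => cayleyInv_mem hw
  have hd : DifferentiableOn ℂ h (Metric.ball 0 1) :=
    (hfc.sub_const _).div (hfc.sub_const _) fun ξ hξ =>
      sub_conj_ne_zero (him (cayleyInv_mem hw hξ)) (him hw)
  have hmaps : MapsTo h (Metric.ball 0 1) (Metric.ball 0 1) := fun ξ hξ =>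
    cayley_mem_ball (him hw) (him (cayleyInv_mem hw hξ))
  have h0 : h 0 = 0 := by simp [hh, cayleyInv, cayley]
  have hS := norm_le_norm_of_mapsTo_ball hd (hmaps.mono_right Metric.ball_subset_closedBall) h0
    (mem_ball_zero_iff.mp (cayley_mem_ball hw hz))
  simpa only [hh, cayleyInv_cayley hw hz] using hS

theorem schwarzPick_of_mapsTo {f : ℂ → ℂ} (hf : DifferentiableOn ℂ f ℍₒ)
    (him : MapsTo f ℍₒ ℍₒ) {z w : ℂ} (hz : z ∈ ℍₒ) (hw : w ∈ ℍₒ) :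
    z.im * w.im * normSq (f z - conj (f w)) ≤ (f z).im * (f w).im * normSq (z - conj w) := by
  have hle := norm_cayley_le_norm_cayley hf him hz hw
  rw [← sq_le_sq₀ (norm_nonneg _) (norm_nonneg _), ← normSq_eq_norm_sq, ← normSq_eq_norm_sq,
    cayley, cayley, normSq_div, normSq_div,
    div_le_div_iff₀ (normSq_pos.mpr (sub_conj_ne_zero (him hz) (him hw)))
      (normSq_pos.mpr (sub_conj_ne_zero hz hw))] at hle
  linear_combination hle / 4 + normSq (z - conj w) * normSq_sub_conj (f z) (f w) / 4
    - normSq (f z - conj (f w)) * normSq_sub_conj z w / 4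

theorem schwarzPick {f : ℂ → ℂ} (hf : DifferentiableOn ℂ f ℍₒ)
    (him : ∀ z ∈ ℍₒ, 0 ≤ (f z).im) {z w : ℂ} (hz : z ∈ ℍₒ) (hw : w ∈ ℍₒ) :
    z.im * w.im * normSq (f z - conj (f w)) ≤ (f z).im * (f w).im * normSq (z - conj w) := by
  have hshift : ∀ δ : ℝ, 0 < δ →
      z.im * w.im * normSq (f z + δ * I - conj (f w + δ * I)) ≤
        (f z + δ * I).im * (f w + δ * I).im * normSq (z - conj w) := fun δ hδ =>
    schwarzPick_of_mapsTo (f := fun z => f z + δ * I) (hf.add_const _)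
      (fun z hz => by
        have := him z hz
        change 0 < (f z + δ * I).im
        simp only [add_im, mul_im, ofReal_re, I_im, ofReal_im, I_re]
        linarith) hz hw
  have hlim : ∀ φ : ℝ → ℝ, Continuous φ → Tendsto φ (𝓝[>] 0) (𝓝 (φ 0)) := fun φ hφ =>
    (hφ.tendsto 0).mono_left nhdsWithin_le_nhds
  simpa using le_of_tendsto_of_tendsto
    (hlim (fun δ : ℝ => z.im * w.im * normSq (f z + δ * I - conj (f w + δ * I))) (by fun_prop))
    (hlim (fun δ : ℝ => (f z + δ * I).im * (f w + δ * I).im * normSq (z - conj w)) (by fun_prop))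
    (eventually_mem_nhdsWithin.mono hshift)

end HalfPlane

section Dslope

variable {𝕜 : Type*} [NontriviallyNormedField 𝕜] {f : 𝕜 → 𝕜} {a : 𝕜}

theorem analyticAt_dslope (hf : AnalyticAt 𝕜 f a) : AnalyticAt 𝕜 (dslope f a) a :=
  let ⟨_, hp⟩ := hf
  hp.has_fpower_series_dslope_fslope.analyticAt

variable [CompleteSpace 𝕜] [CharZero 𝕜]

theorem iteratedDeriv_dslope (hf : AnalyticAt 𝕜 f a) (n : ℕ) :
    iteratedDeriv n (dslope f a) a = iteratedDeriv (n + 1) f a / (n + 1) := by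
  have hp := hf.hasFPowerSeriesAt
  have hslope := hp.has_fpower_series_dslope_fslope
  have hcoeff := congrArg (fun p => p.coeff n)
    (hslope.eq_formalMultilinearSeries hslope.analyticAt.hasFPowerSeriesAt)
  simp only [FormalMultilinearSeries.coeff_fslope, FormalMultilinearSeries.coeff_ofScalars,
    Nat.factorial_succ, Nat.cast_mul, Nat.cast_succ] at hcoeff
  have hn : (n.factorial : 𝕜) ≠ 0 := Nat.cast_ne_zero.mpr n.factorial_ne_zero
  have hn1 : (n + 1 : 𝕜) ≠ 0 := by exact_mod_cast n.succ_ne_zero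
  field_simp at hcoeff ⊢
  linear_combination -hcoeff

theorem deriv_dslope (hf : AnalyticAt 𝕜 f a) :
    deriv (dslope f a) a = iteratedDeriv 2 f a / 2 := by
  rw [← iteratedDeriv_one, iteratedDeriv_dslope hf]
  norm_num

end Dslope

section Boundary

theorem tendsto_ofReal_mul_I : Tendsto (fun t : ℝ => (t * I : ℂ)) (𝓝[>] 0) (𝓝[ℍₒ] 0) := by
  refine tendsto_nhdsWithin_iff.mpr ⟨?_, ?_⟩
  · exact ((by fun_prop : Continuous fun t : ℝ => (t * I : ℂ)).tendsto' _ _ (by simp)).mono_left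
      nhdsWithin_le_nhds
  · filter_upwards [self_mem_nhdsWithin] with t ht
    simpa using ht

theorem tendsto_im_div {F : ℂ → ℂ} {a : ℂ} (hF : HasDerivAt F a 0) (h0 : (F 0).im = 0) :
    Tendsto (fun t : ℝ => (F (t * I)).im / t) (𝓝[>] 0) (𝓝 a.re) := by
  have hline : HasDerivAt (fun t : ℝ => (t * I : ℂ)) I 0 := by
    simpa using (hasDerivAt_id (0 : ℝ)).ofReal_comp.mul_const I
  have hcomp : HasDerivAt (fun t : ℝ => F (t * I)) (a * I) 0 :=
    HasDerivAt.comp (0 : ℝ) (by simpa using hF) hline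
  have him : HasDerivAt (fun t : ℝ => (F (t * I)).im) (a * I).im 0 :=
    imCLM.hasFDerivAt.comp_hasDerivAt (0 : ℝ) hcomp
  simpa [h0, div_eq_inv_mul] using him.tendsto_slope_zero_right

theorem harnack {g : ℂ → ℂ} (hg : DifferentiableOn ℂ g ℍₒ) (him : ∀ z ∈ ℍₒ, 0 ≤ (g z).im)
    {z w : ℂ} (hz : z ∈ ℍₒ) (hw : w ∈ ℍₒ) :
    z.im * w.im * (g z).im ≤ (g w).im * normSq (z - conj w) := by
  rcases (him z hz).eq_or_lt with hgz | hgz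
  · rw [← hgz, mul_zero]
    exact mul_nonneg (him w hw) (normSq_nonneg _)
  · have hsq : (g z).im ^ 2 ≤ normSq (g z - conj (g w)) := by
      rw [normSq_apply, sub_im, conj_im, sub_neg_eq_add]
      nlinarith [mul_self_nonneg (g z - conj (g w)).re, mul_nonneg hgz.le (him w hw),
        sq_nonneg (g w).im]
    have hzw : 0 < z.im * w.im := mul_pos hz hw
    have h := (mul_le_mul_of_nonneg_left hsq hzw.le).trans (schwarzPick hg him hz hw)
    refine le_of_mul_le_mul_right ?_ hgz
    linarith

variable {F : ℂ → ℂ} {x d : ℝ}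

theorem tendsto_normSq_sub_conj (hF : ContinuousAt F 0) (h0 : F 0 = x) (z : ℂ) :
    Tendsto (fun t : ℝ => normSq (z - conj (F (t * I)))) (𝓝[>] 0) (𝓝 (normSq (z - x))) := by
  have hc : ContinuousAt (fun w => normSq (z - conj (F w))) 0 := by
    have := continuous_conj.continuousAt.comp hF
    exact continuous_normSq.continuousAt.comp (continuousAt_const.sub this)
  simpa [h0, Function.comp_def] using
    hc.tendsto.comp (tendsto_ofReal_mul_I.mono_right nhdsWithin_le_nhds)

/-- A form of Julia's lemma: the Schwarz–Pick inequality for the points `z` and `F (t i)`, divided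
by `t`, in the limit `t → 0`. -/
theorem julia {G : ℂ → ℂ} (hG : DifferentiableOn ℂ G ℍₒ) (him : ∀ z ∈ ℍₒ, 0 ≤ (G z).im)
    (hF : HasDerivAt F d 0) (h0 : F 0 = x) (hinv : ∀ᶠ w in 𝓝[ℍₒ] 0, F w ∈ ℍₒ ∧ G (F w) = w)
    {z : ℂ} (hz : z ∈ ℍₒ) :
    z.im * d * normSq (G z) ≤ (G z).im * normSq (z - x) := by
  have hspeed : Tendsto (fun t : ℝ => (F (t * I)).im / t) (𝓝[>] 0) (𝓝 d) := by
    simpa using tendsto_im_div hF (by simp [h0])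
  have hG0 : Tendsto (fun t : ℝ => normSq (G z - conj (t * I))) (𝓝[>] 0) (𝓝 (normSq (G z))) := by
    simpa using tendsto_normSq_sub_conj (F := id) (x := 0) continuousAt_id (by simp) (G z)
  refine le_of_tendsto_of_tendsto ((hspeed.const_mul z.im).mul hG0)
    ((tendsto_normSq_sub_conj hF.continuousAt h0 z).const_mul (G z).im) ?_
  filter_upwards [self_mem_nhdsWithin, tendsto_ofReal_mul_I.eventually hinv] with t ht ⟨hFt, hGFt⟩
  have hpick := schwarzPick hG him hz hFt
  rw [hGFt, mul_I_im, ofReal_re] at hpick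
  rw [mul_div_assoc', div_mul_eq_mul_div, div_le_iff₀ ht]
  linarith

theorem boundary_harnack {g k : ℂ → ℂ} {a : ℂ} (hg : DifferentiableOn ℂ g ℍₒ)
    (him : ∀ z ∈ ℍₒ, 0 ≤ (g z).im) (hF : HasDerivAt F d 0) (h0 : F 0 = x)
    (hk : HasDerivAt k a 0) (hk0 : (k 0).im = 0)
    (hgF : ∀ᶠ w in 𝓝[ℍₒ] 0, F w ∈ ℍₒ ∧ g (F w) = k w) {z : ℂ} (hz : z ∈ ℍₒ) :
    z.im * d * (g z).im ≤ a.re * normSq (z - x) := by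
  have hspeed : Tendsto (fun t : ℝ => (F (t * I)).im / t) (𝓝[>] 0) (𝓝 d) := by
    simpa using tendsto_im_div hF (by simp [h0])
  refine le_of_tendsto_of_tendsto ((hspeed.const_mul z.im).mul_const (g z).im)
    ((tendsto_im_div hk hk0).mul (tendsto_normSq_sub_conj hF.continuousAt h0 z)) ?_
  filter_upwards [self_mem_nhdsWithin, tendsto_ofReal_mul_I.eventually hgF] with t ht ⟨hFt, hgFt⟩
  have hharnack := harnack hg him hz hFt
  rw [hgFt] at hharnack
  rw [mul_div_assoc', div_mul_eq_mul_div, div_mul_eq_mul_div, div_le_div_iff_of_pos_right ht]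
  exact hharnack

/-- The function `-1/G + d/(z - x)`. Julia's lemma says that it takes the upper half-plane to its
closure when `1/d` is the boundary derivative of `G` at `x` and `G x = 0`. -/
noncomputable def juliaRemainder (G : ℂ → ℂ) (x d : ℝ) (z : ℂ) : ℂ := -(G z)⁻¹ + d * (z - x)⁻¹

theorem juliaRemainder_im (G : ℂ → ℂ) (x d : ℝ) (z : ℂ) :
    (juliaRemainder G x d z).im = (G z).im / normSq (G z) - d * z.im / normSq (z - x) := by
  simp only [juliaRemainder, add_im, neg_im, inv_im, im_ofReal_mul, sub_im, ofReal_im, sub_zero]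
  ring

theorem differentiableOn_juliaRemainder {G : ℂ → ℂ} (hG : DifferentiableOn ℂ G ℍₒ)
    (hne : ∀ z ∈ ℍₒ, G z ≠ 0) (x d : ℝ) : DifferentiableOn ℂ (juliaRemainder G x d) ℍₒ := by
  refine (hG.inv hne).neg.add (DifferentiableOn.const_mul ?_ _)
  exact DifferentiableOn.inv (by fun_prop) fun z hz => sub_ofReal_ne_zero hz x

theorem juliaRemainder_comp_eq {G : ℂ → ℂ} (h0 : F 0 = x) (hF' : deriv F 0 = d) {w : ℂ}
    (hw : w ≠ 0) (hx : F w ≠ x) (hGF : G (F w) = w) :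
    juliaRemainder G x d (F w) = -(dslope (dslope F 0) 0 w / dslope F 0 w) := by
  have hx := sub_ne_zero.mpr hx
  rw [juliaRemainder, hGF, dslope_of_ne _ hw, slope_def_field, dslope_of_ne _ hw, slope_def_field,
    dslope_same, hF', h0, sub_zero]
  field_simp
  ring

/-- The derivative is `-1/6` times the Schwarzian derivative of `F` at `0`. -/
theorem hasDerivAt_dslope_dslope_div {a b : ℝ} (hF : AnalyticAt ℂ F 0) (hd : d ≠ 0)
    (hF' : deriv F 0 = d) (ha : iteratedDeriv 2 F 0 = a) (hb : iteratedDeriv 3 F 0 = b) :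
    HasDerivAt (fun w => -(dslope (dslope F 0) 0 w / dslope F 0 w))
      ((3 * a ^ 2 - 2 * d * b) / (12 * d ^ 2) : ℝ) 0 := by
  have hφ := analyticAt_dslope hF
  have hψ := analyticAt_dslope hφ
  have hφ' : deriv (dslope F 0) 0 = a / 2 := by rw [deriv_dslope hF, ha]
  have hψ' : deriv (dslope (dslope F 0) 0) 0 = b / 6 := by
    rw [deriv_dslope hφ, iteratedDeriv_dslope hF, hb, div_div]
    norm_num
  have hd' : (d : ℂ) ≠ 0 := ofReal_ne_zero.mpr hd
  have h := (hψ.differentiableAt.hasDerivAt.div hφ.differentiableAt.hasDerivAt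
    (by rwa [dslope_same, hF'])).neg
  rw [hψ', dslope_same (dslope F 0), hφ', dslope_same, hF'] at h
  refine h.congr_deriv ?_
  push_cast
  field_simp
  ring

/-- The boundary Harnack inequality for `-1/G + d/(z - x)`, where `(3 a ^ 2 - 2 d b) / (12 d ^ 2)`
is `-1/6` times the Schwarzian derivative of `F` at `0`. -/
theorem schwarzian_lower_bound {G : ℂ → ℂ} (hG : DifferentiableOn ℂ G ℍₒ)
    (him : MapsTo G ℍₒ ℍₒ) {a b : ℝ} (hF : AnalyticAt ℂ F 0) (hd : 0 < d)
    (h0 : F 0 = x) (hF' : deriv F 0 = d) (ha : iteratedDeriv 2 F 0 = a)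
    (hb : iteratedDeriv 3 F 0 = b) (hinv : ∀ᶠ w in 𝓝[ℍₒ] 0, F w ∈ ℍₒ ∧ G (F w) = w)
    {z : ℂ} (hz : z ∈ ℍₒ) :
    12 * z.im * d ^ 3 * ((G z).im / normSq (G z) - d * z.im / normSq (z - x)) ≤
      (3 * a ^ 2 - 2 * d * b) * normSq (z - x) := by
  have hFd : HasDerivAt F d 0 := hF' ▸ hF.differentiableAt.hasDerivAt
  have hne : ∀ z ∈ ℍₒ, G z ≠ 0 := fun z hz => by simpa using sub_ofReal_ne_zero (him hz) 0
  have hnonneg : ∀ z ∈ ℍₒ, 0 ≤ (juliaRemainder G x d z).im := fun z hz => by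
    rw [juliaRemainder_im, sub_nonneg, div_le_div_iff₀
      (normSq_pos.mpr (sub_ofReal_ne_zero hz x)) (normSq_pos.mpr (hne z hz))]
    linarith [julia hG (fun z hz => (him hz).le) hFd h0 hinv hz]
  have hcomp : ∀ᶠ w in 𝓝[ℍₒ] 0, F w ∈ ℍₒ ∧ juliaRemainder G x d (F w)
      = -(dslope (dslope F 0) 0 w / dslope F 0 w) := by
    filter_upwards [self_mem_nhdsWithin, hinv] with w hw ⟨hFw, hGFw⟩
    refine ⟨hFw, juliaRemainder_comp_eq h0 hF' ?_ (sub_ne_zero.mp (sub_ofReal_ne_zero hFw x)) hGFw⟩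
    simpa using sub_ofReal_ne_zero hw 0
  have hk0 : (-(dslope (dslope F 0) 0 0 / dslope F 0 0)).im = 0 := by
    rw [dslope_same, dslope_same, hF', deriv_dslope hF, ha]
    norm_cast
  have hbound := boundary_harnack (differentiableOn_juliaRemainder hG hne x d) hnonneg hFd h0
    (hasDerivAt_dslope_dslope_div hF hd.ne' hF' ha hb) hk0 hcomp hz
  rw [juliaRemainder_im, ofReal_re, div_mul_eq_mul_div, le_div_iff₀ (by positivity)] at hbound
  linarith

end Boundary

section LogPotential

open MeasureTheory

theorem sub_ofReal_mem_slitPlane {z : ℂ} (hz : z ∈ ℍₒ) (t : ℝ) : z - t ∈ slitPlane :=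
  mem_slitPlane_iff.mpr (Or.inr (by simpa using (show 0 < z.im from hz).ne'))

theorem im_le_norm_sub_ofReal (z : ℂ) (t : ℝ) : z.im ≤ ‖z - t‖ := by
  simpa using (le_abs_self _).trans (abs_im_le_norm (z - t))

/-- The function `i ∫ log (z - t) dν(t)` on the upper half-plane, whose imaginary part is the
logarithmic potential of `ν`. -/
noncomputable def logPotential (ν : Measure ℝ) (z : ℂ) : ℂ := I * ∫ t, Complex.log (z - t) ∂ν

theorem continuous_log_sub_ofReal {z : ℂ} (hz : z ∈ ℍₒ) :
    Continuous fun t : ℝ => Complex.log (z - t) :=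
  Continuous.clog (by fun_prop) (sub_ofReal_mem_slitPlane hz)

variable {ν : Measure ℝ} {M : ℝ} {z : ℂ}

theorem integrable_log_sub_ofReal [IsFiniteMeasure ν] (hM : ∀ᵐ t ∂ν, |t| ≤ M) (hz : z ∈ ℍₒ) :
    Integrable (fun t : ℝ => Complex.log (z - t)) ν := by
  obtain ⟨C, hC⟩ := (isCompact_Icc (a := -M) (b := M)).exists_bound_of_continuousOn
    (continuous_log_sub_ofReal hz).continuousOn
  refine Integrable.of_bound (continuous_log_sub_ofReal hz).aestronglyMeasurable C ?_
  filter_upwards [hM] with t ht using hC t (abs_le.mp ht)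

theorem logPotential_re [IsFiniteMeasure ν] (hM : ∀ᵐ t ∂ν, |t| ≤ M) (hz : z ∈ ℍₒ) :
    (logPotential ν z).re = -∫ t, arg (z - t) ∂ν := by
  rw [logPotential, I_mul_re, ← imCLM_apply,
    ← imCLM.integral_comp_comm (integrable_log_sub_ofReal hM hz)]
  simp only [imCLM_apply, log_im]

theorem logPotential_im [IsFiniteMeasure ν] (hM : ∀ᵐ t ∂ν, |t| ≤ M) (hz : z ∈ ℍₒ) :
    (logPotential ν z).im = ∫ t, Real.log ‖z - t‖ ∂ν := by
  rw [logPotential, I_mul_im, ← reCLM_apply,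
    ← reCLM.integral_comp_comm (integrable_log_sub_ofReal hM hz)]
  simp only [reCLM_apply, log_re]

theorem differentiableOn_logPotential [IsFiniteMeasure ν] (hM : ∀ᵐ t ∂ν, |t| ≤ M) :
    DifferentiableOn ℂ (logPotential ν) ℍₒ := by
  intro z hz
  have hz : 0 < z.im := hz
  have hs : {w : ℂ | z.im / 2 < w.im} ∈ 𝓝 z :=
    (isOpen_lt continuous_const continuous_im).mem_nhds (half_lt_self hz)
  have hs' : ∀ w ∈ {w : ℂ | z.im / 2 < w.im}, w ∈ ℍₒ := fun w hw => (half_pos hz).trans hw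
  have hbound : ∀ w ∈ {w : ℂ | z.im / 2 < w.im}, ∀ t : ℝ, ‖1 / (w - t)‖ ≤ 1 / (z.im / 2) := by
    intro w hw t
    rw [norm_div, norm_one]
    exact one_div_le_one_div_of_le (half_pos hz) (hw.le.trans (im_le_norm_sub_ofReal w t))
  have hderiv : Continuous fun t : ℝ => 1 / (z - t) :=
    continuous_const.div (by fun_prop) (sub_ofReal_ne_zero hz)
  have h := hasDerivAt_integral_of_dominated_loc_of_deriv_le (μ := ν)
    (F := fun w t => Complex.log (w - t)) (F' := fun w t => 1 / (w - t)) hs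
    (by filter_upwards [hs] with w hw using
      (continuous_log_sub_ofReal (hs' w hw)).aestronglyMeasurable)
    (integrable_log_sub_ofReal hM hz) hderiv.aestronglyMeasurable
    (Eventually.of_forall fun t w hw => hbound w hw t) (integrable_const _)
    (Eventually.of_forall fun t w hw =>
      ((hasDerivAt_id w).sub_const _).clog (sub_ofReal_mem_slitPlane (hs' w hw) t))
  exact (h.2.differentiableAt.const_mul I).differentiableWithinAt

variable [IsProbabilityMeasure ν]

theorem logPotential_re_mem_Icc (hM : ∀ᵐ t ∂ν, |t| ≤ M) (hz : z ∈ ℍₒ) :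
    (logPotential ν z).re ∈ Icc (-π) 0 := by
  have hmem : ∫ t, arg (z - t) ∂ν ∈ Icc 0 π := by
    refine (convex_Icc _ _).integral_mem isClosed_Icc
      (Eventually.of_forall fun t => ⟨?_, arg_le_pi _⟩) ?_
    · rw [arg_nonneg_iff]
      simpa using (show 0 < z.im from hz).le
    · simpa only [log_im, RCLike.im_to_complex] using (integrable_log_sub_ofReal hM hz).im
  rw [logPotential_re hM hz]
  exact ⟨neg_le_neg hmem.2, neg_nonpos.mpr hmem.1⟩

theorem logPotential_im_mem_Icc (hM : ∀ᵐ t ∂ν, |t| ≤ M) (hz : z ∈ ℍₒ) :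
    (logPotential ν z).im ∈ Icc (Real.log z.im) (Real.log (‖z‖ + M)) := by
  rw [logPotential_im hM hz]
  refine (convex_Icc _ _).integral_mem isClosed_Icc ?_ ?_
  · filter_upwards [hM] with t ht
    have hle : ‖z - t‖ ≤ ‖z‖ + M := (norm_sub_le _ _).trans (by simpa using ht)
    have him := im_le_norm_sub_ofReal z t
    exact ⟨Real.log_le_log hz him, Real.log_le_log (lt_of_lt_of_le hz him) hle⟩
  · simpa only [log_re, RCLike.re_to_complex] using (integrable_log_sub_ofReal hM hz).re

end LogPotential

section Jensen

theorem norm_two_cos_sub_two_cos (w : ℂ) (τ : ℝ) :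
    ‖2 * Complex.cos w - 2 * Complex.cos τ‖
      = ‖exp (τ * I) - exp (I * w)‖ * ‖exp (τ * I) - exp (-(I * w))‖ := by
  have hw : exp (I * w) * exp (-(I * w)) = 1 := by rw [← exp_add, add_neg_cancel, exp_zero]
  have hτ : exp (-(τ * I)) * exp (τ * I) = 1 := by rw [← exp_add, neg_add_cancel, exp_zero]
  have hfactor : (2 * Complex.cos w - 2 * Complex.cos τ) * exp (τ * I)
      = -((exp (τ * I) - exp (I * w)) * (exp (τ * I) - exp (-(I * w)))) := by
    rw [Complex.two_cos, Complex.two_cos, neg_mul, neg_mul, mul_comm w I]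
    linear_combination hw - hτ
  simpa [norm_exp_ofReal_mul_I] using congrArg norm hfactor

theorem posLog_norm_exp_add_posLog_norm_exp_neg (w : ℂ) :
    Real.posLog ‖exp (I * w)‖ + Real.posLog ‖exp (-(I * w))‖ = |w.im| := by
  simp only [Real.posLog, norm_exp, Real.log_exp, neg_re, I_mul_re, neg_neg]
  rcases le_total 0 w.im with h | h
  · rw [max_eq_left (neg_nonpos.mpr h), max_eq_right h, abs_of_nonneg h, zero_add]
  · rw [max_eq_right (neg_nonneg.mpr h), max_eq_left h, abs_of_nonpos h, add_zero]

/-- Jensen's formula for the two factors of `2 cos w - 2 cos τ` as a polynomial in `e^{iτ}`. -/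
theorem integral_log_norm_two_cos_sub {w : ℂ}
    (hw : ∀ τ : ℝ, 2 * Complex.cos w - 2 * Complex.cos τ ≠ 0) :
    ∫ τ in (0 : ℝ)..2 * π, Real.log ‖2 * Complex.cos w - 2 * Complex.cos τ‖ = 2 * π * |w.im| := by
  have haverage := Real.circleAverage_add
    (circleIntegrable_log_norm_sub_const (a := exp (I * w)) (c := 0) 1)
    (circleIntegrable_log_norm_sub_const (a := exp (-(I * w))) (c := 0) 1)
  rw [circleAverage_log_norm_sub_const_eq_posLog, circleAverage_log_norm_sub_const_eq_posLog,
    posLog_norm_exp_add_posLog_norm_exp_neg, Real.circleAverage_def, smul_eq_mul,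
    inv_mul_eq_iff_eq_mul₀ (by positivity)] at haverage
  rw [← haverage]
  refine intervalIntegral.integral_congr fun τ _ => ?_
  have hne := norm_ne_zero_iff.mpr (hw τ)
  rw [norm_two_cos_sub_two_cos] at hne
  simp only [Pi.add_apply, circleMap, ofReal_one, one_mul, zero_add]
  rw [norm_two_cos_sub_two_cos, Real.log_mul (left_ne_zero_of_mul hne) (right_ne_zero_of_mul hne)]

end Jensen

section DensityOfStates

open MeasureTheory Polynomial
open scoped ProbabilityTheory

variable {p : ℕ}

/-- The band functions of a `p`-periodic operator with discriminant `Q`, as functions of the phase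
`τ = p k`: the numbers `e_1(τ), …, e_p(τ)` are the solutions `x` of `Q(x) = 2 cos τ`. -/
structure IsBandFamily (Q : ℝ[X]) (e : Fin p → ℝ → ℝ) : Prop where
  continuous : ∀ j, Continuous (e j)
  sub_eq_prod : ∀ τ, Q - C (2 * Real.cos τ) = ∏ j, (X - C (e j τ))

/-- The average over the bands of the distribution of `e j τ` for a uniformly distributed phase
`τ`. -/
noncomputable def densityOfStates (e : Fin p → ℝ → ℝ) : Measure ℝ :=
  (p : ℝ≥0∞)⁻¹ • ∑ j, (volume[|Ioc 0 (2 * π)]).map (e j)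

theorem isProbabilityMeasure_uniform_phase : IsProbabilityMeasure (volume[|Ioc 0 (2 * π)]) :=
  ProbabilityTheory.cond_isProbabilityMeasure_of_finite (by simp [Real.pi_pos])
    (by simp [ENNReal.mul_eq_top])

theorem integral_uniform_phase (f : ℝ → ℝ) :
    ∫ τ, f τ ∂(volume[|Ioc 0 (2 * π)]) = (2 * π)⁻¹ * ∫ τ in (0 : ℝ)..2 * π, f τ := by
  rw [ProbabilityTheory.cond, integral_smul_measure,
    intervalIntegral.integral_of_le Real.two_pi_pos.le]
  simp [Real.pi_pos.le]

variable {e : Fin p → ℝ → ℝ}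

theorem isProbabilityMeasure_densityOfStates [NeZero p] (he : ∀ j, Continuous (e j)) :
    IsProbabilityMeasure (densityOfStates e) := by
  have := isProbabilityMeasure_uniform_phase
  refine ⟨?_⟩
  simp [densityOfStates, Measure.map_apply (he _).measurable MeasurableSet.univ,
    ENNReal.inv_mul_cancel, NeZero.ne p]

theorem ae_abs_le_densityOfStates {M : ℝ} (he : ∀ j, Continuous (e j))
    (hM : ∀ j τ, |e j τ| ≤ M) : ∀ᵐ t ∂densityOfStates e, |t| ≤ M := by
  refine Measure.ae_smul_measure (ae_finsetSum_measure_iff.mpr fun j _ => ?_) _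
  rw [ae_map_iff (he j).aemeasurable (measurableSet_le (by fun_prop) measurable_const)]
  exact Eventually.of_forall (hM j)

theorem integral_densityOfStates (he : ∀ j, Continuous (e j)) {f : ℝ → ℝ} (hf : Continuous f) :
    ∫ t, f t ∂densityOfStates e = (2 * π * p)⁻¹ * ∫ τ in (0 : ℝ)..2 * π, ∑ j, f (e j τ) := by
  have hint : ∀ j, Integrable (fun τ => f (e j τ)) (volume[|Ioc 0 (2 * π)]) := fun j =>
    ((hf.comp (he j)).integrableOn_Ioc).smul_measure (by simp [Real.pi_pos])
  rw [densityOfStates, integral_smul_measure, integral_finsetSum_measure fun j _ =>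
    (integrable_map_measure hf.aestronglyMeasurable (he j).aemeasurable).mpr (hint j)]
  simp only [integral_map (he _).aemeasurable hf.aestronglyMeasurable]
  rw [← integral_finsetSum _ fun j _ => hint j, integral_uniform_phase]
  simp [mul_assoc, mul_comm, mul_left_comm]

theorem IsBandFamily.aeval_sub_eq_prod {Q : ℝ[X]} (h : IsBandFamily Q e) (τ : ℝ) (z : ℂ) :
    aeval z Q - 2 * Complex.cos τ = ∏ j, (z - e j τ) := by
  simpa using congrArg (aeval z) (h.sub_eq_prod τ)

/-- The Thouless formula: the logarithmic potential of the density of states is the Lyapunov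
exponent. -/
theorem IsBandFamily.logPotential_im_eq {Q : ℝ[X]} {M : ℝ} [NeZero p] (h : IsBandFamily Q e)
    (hM : ∀ j τ, |e j τ| ≤ M) {z w : ℂ} (hz : z ∈ ℍₒ) (hw : aeval z Q = 2 * Complex.cos w) :
    (logPotential (densityOfStates e) z).im = |w.im| / p := by
  have := isProbabilityMeasure_densityOfStates h.continuous
  have hne : ∀ j τ, z - e j τ ≠ 0 := fun j τ => sub_ofReal_ne_zero hz _
  have hcont : Continuous fun t : ℝ => Real.log ‖z - t‖ :=
    Continuous.log (by fun_prop) fun t => norm_ne_zero_iff.mpr (sub_ofReal_ne_zero hz t)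
  have hsum : ∀ τ : ℝ, ∑ j, Real.log ‖z - e j τ‖
      = Real.log ‖2 * Complex.cos w - 2 * Complex.cos τ‖ := fun τ => by
    rw [← hw, h.aeval_sub_eq_prod, norm_prod,
      Real.log_prod fun j _ => norm_ne_zero_iff.mpr (hne j τ)]
  rw [logPotential_im (ae_abs_le_densityOfStates h.continuous hM) hz,
    integral_densityOfStates h.continuous hcont]
  simp only [hsum]
  rw [integral_log_norm_two_cos_sub fun τ => ?_]
  · field_simp
  · rw [← hw, h.aeval_sub_eq_prod]
    exact Finset.prod_ne_zero_iff.mpr fun j _ => hne j τ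

theorem IsBandFamily.logPotential_mem {Q : ℝ[X]} {M : ℝ} [NeZero p] (h : IsBandFamily Q e)
    (hM : ∀ j τ, |e j τ| ≤ M) {z : ℂ} (hz : z ∈ ℍₒ) :
    logPotential (densityOfStates e) z ∈ ℍₒ := by
  obtain ⟨w, hw⟩ := Complex.cos_surjective (aeval z Q / 2)
  have hw : aeval z Q = 2 * Complex.cos w := by rw [hw, mul_div_cancel₀ _ two_ne_zero]
  change 0 < (logPotential _ z).im
  rw [h.logPotential_im_eq hM hz hw]
  refine div_pos (abs_pos.mpr fun hw0 => ?_) (Nat.cast_pos.mpr (NeZero.pos p))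
  have hprod := h.aeval_sub_eq_prod w.re z
  rw [conj_eq_iff_re.mp (conj_eq_iff_im.mpr hw0), hw, sub_self] at hprod
  obtain ⟨j, -, hj⟩ := Finset.prod_eq_zero_iff.mp hprod.symm
  exact sub_ofReal_ne_zero hz _ hj

end DensityOfStates

section Complexification

theorem eventuallyEq_of_eventually_eq_ofReal {F G : ℂ → ℂ} {x : ℝ} (hF : AnalyticAt ℂ F x)
    (hG : AnalyticAt ℂ G x) (h : ∀ᶠ t : ℝ in 𝓝 x, F t = G t) : F =ᶠ[𝓝 (x : ℂ)] G := by
  have hmap : Tendsto ofReal (𝓝[≠] x) (𝓝[≠] (x : ℂ)) :=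
    continuous_ofReal.continuousWithinAt.tendsto_nhdsWithin fun t ht => by simpa using ht
  exact (hF.frequently_eq_iff_eventually_eq hG).mp
    (hmap.frequently (h.filter_mono nhdsWithin_le_nhds).frequently)

theorem exists_complexification {f : ℝ → ℝ} {x : ℝ} (hf : AnalyticAt ℝ f x) :
    ∃ F : ℂ → ℂ, AnalyticAt ℂ F x ∧ (∀ᶠ t : ℝ in 𝓝 x, F t = f t) ∧
      ∀ n, iteratedDeriv n F x = (iteratedDeriv n f x : ℝ) := by
  set c : ℕ → ℝ := fun n => iteratedDeriv n f x / n.factorial with hc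
  set P := FormalMultilinearSeries.ofScalars ℂ (fun n => (c n : ℂ))
  have hradius : 0 < P.radius :=
    hf.hasFPowerSeriesAt.radius_pos.trans_le <| FormalMultilinearSeries.radius_le_of_le fun n => by
      simp [P, c]
  have hF : HasFPowerSeriesAt (fun z => P.sum (z - x)) P x := by
    simpa using (P.hasFPowerSeriesOnBall hradius).hasFPowerSeriesAt.comp_sub (x : ℂ)
  refine ⟨_, hF.analyticAt, ?_, fun n => ?_⟩
  · have hreal := hasFPowerSeriesAt_iff'.mp hf.hasFPowerSeriesAt
    have hcomplex := (continuous_ofReal.tendsto x).eventually (hasFPowerSeriesAt_iff'.mp hF)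
    filter_upwards [hreal, hcomplex] with t ht ht'
    refine ht'.unique ?_
    simpa [P, c, FormalMultilinearSeries.coeff_ofScalars] using hasSum_ofReal.mpr ht
  · have hcoeff : iteratedDeriv n (fun z => P.sum (z - x)) x / n.factorial = c n := by
      simpa [P] using congrArg (fun R => R.coeff n)
        (hF.analyticAt.hasFPowerSeriesAt.eq_formalMultilinearSeries hF)
    rw [hc, ofReal_div, ofReal_natCast] at hcoeff
    exact (div_left_inj' (Nat.cast_ne_zero.mpr n.factorial_ne_zero)).mp hcoeff

end Complexification

section LocalInverse

/-- Compare `F w` with the real number `F (Re w)`. -/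
theorem eventually_mem_upperHalfPlaneSet {F : ℂ → ℂ} {d : ℝ} (hF : HasStrictDerivAt F d 0)
    (hd : 0 < d) (hreal : ∀ᶠ t : ℝ in 𝓝 0, (F t).im = 0) : ∀ᶠ w in 𝓝[ℍₒ] 0, F w ∈ ℍₒ := by
  have hpair : Tendsto (fun w : ℂ => (w, (w.re : ℂ))) (𝓝 0) (𝓝 (0, 0)) :=
    Continuous.tendsto' (by fun_prop) _ _ (by simp)
  have hre : Tendsto Complex.re (𝓝 0) (𝓝 0) := continuous_re.tendsto' _ _ zero_re
  have hsmall := hpair.eventually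
    (hF.hasStrictFDerivAt.isLittleO.bound (half_pos hd))
  filter_upwards [nhdsWithin_le_nhds hsmall, nhdsWithin_le_nhds (hre.eventually hreal),
    self_mem_nhdsWithin] with w hw hw0 hpos
  have hpos : 0 < w.im := hpos
  have hdiff : w - w.re = w.im * I := by
    linear_combination -re_add_im w
  have him : |(F w).im - w.im * d| ≤ d / 2 * w.im := by
    have := (abs_im_le_norm _).trans hw
    rw [hdiff] at this
    simpa [hw0, abs_of_pos hpos] using this
  change 0 < (F w).im
  nlinarith [abs_le.mp him, mul_pos hpos hd]

theorem exists_eventually_eq_ofReal_of_im_eq_zero {g : ℂ → ℂ}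
    (hg : ∀ᶠ w in 𝓝[ℍₒ] 0, DifferentiableAt ℂ g w) (him : ∀ᶠ w in 𝓝[ℍₒ] 0, (g w).im = 0) :
    ∃ b : ℝ, ∀ᶠ w in 𝓝[ℍₒ] 0, g w = b := by
  obtain ⟨r, hr, hball⟩ := (Metric.nhdsWithin_basis_ball.eventually_iff).mp (hg.and him)
  have hopen : IsOpen (Metric.ball (0 : ℂ) r ∩ ℍₒ) :=
    Metric.isOpen_ball.inter UpperHalfPlane.isOpen_upperHalfPlaneSet
  have hconvex : Convex ℝ (Metric.ball (0 : ℂ) r ∩ ℍₒ) :=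
    (convex_ball _ _).inter (convex_halfSpace_im_gt 0)
  have hmem : Metric.ball (0 : ℂ) r ∩ ℍₒ ∈ 𝓝[ℍₒ] 0 := Metric.nhdsWithin_basis_ball.mem_of_mem hr
  have hne : (Metric.ball (0 : ℂ) r ∩ ℍₒ).Nonempty :=
    (tendsto_ofReal_mul_I.eventually hmem).exists.elim fun t ht => ⟨_, ht⟩
  have han : AnalyticOnNhd ℂ g (Metric.ball (0 : ℂ) r ∩ ℍₒ) :=
    DifferentiableOn.analyticOnNhd
      (fun w hw => (hball hw).1.differentiableWithinAt) hopen
  obtain ⟨b, hb⟩ := han.eq_const_add_im_mul_I_of_re_eq_const (fun w hw => (hball hw).2) hopen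
    ⟨hne, hconvex.isPreconnected⟩
  exact ⟨b, by filter_upwards [hmem] with w hw; simpa using hb w hw⟩

open Polynomial in
/-- By the Thouless formula the two sides of the equation have the same imaginary part. -/
theorem IsBandFamily.exists_logPotential_comp_eq {p : ℕ} [NeZero p] {Q : ℝ[X]}
    {e : Fin p → ℝ → ℝ} {M : ℝ} (h : IsBandFamily Q e) (hM : ∀ j τ, |e j τ| ≤ M) {F : ℂ → ℂ}
    {d θ : ℝ} (hF : AnalyticAt ℂ F 0) (hd : 0 < d) (hF' : deriv F 0 = d)
    (hreal : ∀ᶠ t : ℝ in 𝓝 0, (F t).im = 0)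
    (hQ : ∀ᶠ t : ℝ in 𝓝 0, aeval (F t) Q = 2 * Complex.cos (θ + p * t)) :
    ∃ b ∈ Icc (-π) 0, ∀ᶠ w in 𝓝[ℍₒ] 0,
      F w ∈ ℍₒ ∧ logPotential (densityOfStates e) (F w) = w + b := by
  have := isProbabilityMeasure_densityOfStates h.continuous
  have hae := ae_abs_le_densityOfStates h.continuous hM
  have hmem := eventually_mem_upperHalfPlaneSet (hF' ▸ hF.hasStrictDerivAt) hd hreal
  have hQ' : ∀ᶠ w in 𝓝[ℍₒ] 0, aeval (F w) Q = 2 * Complex.cos (θ + p * w) := by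
    refine nhdsWithin_le_nhds ?_
    have hext := eventuallyEq_of_eventually_eq_ofReal (F := fun w => aeval (F w) Q)
      (G := fun w => 2 * Complex.cos (θ + p * w)) (x := 0)
      (by simpa using hF.aeval_polynomial Q) (by fun_prop) hQ
    rwa [ofReal_zero] at hext
  obtain ⟨b, hb⟩ := exists_eventually_eq_ofReal_of_im_eq_zero
    (g := fun w => logPotential (densityOfStates e) (F w) - w) (by
      filter_upwards [hmem, nhdsWithin_le_nhds hF.eventually_analyticAt] with w hw hFw
      exact ((((differentiableOn_logPotential hae).differentiableAt
        (UpperHalfPlane.isOpen_upperHalfPlaneSet.mem_nhds hw)).comp w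
          hFw.differentiableAt).sub differentiableAt_id)) (by
      filter_upwards [hmem, hQ', self_mem_nhdsWithin] with w hw hwQ hpos
      rw [sub_im, h.logPotential_im_eq hM hw hwQ]
      have hpos : 0 < w.im := hpos
      simp [abs_mul, abs_of_pos hpos, NeZero.ne p])
  have heq : ∀ᶠ w in 𝓝[ℍₒ] 0, F w ∈ ℍₒ ∧ logPotential (densityOfStates e) (F w) = w + b :=
    hmem.and (hb.mono fun w hw => by linear_combination hw)
  refine ⟨b, ?_, heq⟩
  obtain ⟨t, ht, hbt⟩ := (tendsto_ofReal_mul_I.eventually heq).exists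
  simpa [hbt] using logPotential_re_mem_Icc hae ht

end LocalInverse

section UniformBound

open MeasureTheory Polynomial

theorem normSq_add_mul_I_sub (x η : ℝ) : normSq ((x + η * I : ℂ) - x) = η ^ 2 := by
  rw [add_sub_cancel_left, normSq_mul, normSq_I, mul_one, normSq_ofReal, sq]

theorem add_mul_I_mem_upperHalfPlaneSet (x : ℝ) {η : ℝ} (hη : 0 < η) : (x + η * I : ℂ) ∈ ℍₒ := by
  change 0 < (x + η * I : ℂ).im
  simpa using hη

theorem inv_two_mul_le_im_div_normSq {z : ℂ} {L : ℝ} (hre : |z.re| ≤ z.im) (him : 0 < z.im)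
    (hL : z.im ≤ L) : (2 * L)⁻¹ ≤ z.im / normSq z := by
  have hpos : 0 < normSq z := normSq_pos.mpr fun h => by simp [h] at him
  rw [inv_le_comm₀ (by linarith) (by positivity), inv_div, div_le_iff₀ him, normSq_apply]
  nlinarith [abs_le.mp hre]

section Herglotz

variable {ν : Measure ℝ} [IsProbabilityMeasure ν] {M x d b η : ℝ} {F : ℂ → ℂ}

theorem logPotential_add_mul_I_im_mem_Icc (hM : ∀ᵐ t ∂ν, |t| ≤ M) (hx : |x| ≤ M) (hη : 0 < η) :
    (logPotential ν (x + η * I)).im ∈ Icc (Real.log η) (Real.log (η + 2 * M)) := by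
  have hmem := logPotential_im_mem_Icc hM (add_mul_I_mem_upperHalfPlaneSet x hη)
  have hnorm : ‖(x + η * I : ℂ)‖ ≤ |x| + η := by
    simpa [abs_of_pos hη] using norm_add_le (x : ℂ) (η * I)
  have him : ((x : ℂ) + η * I).im = η := by simp
  have hpos : 0 < ‖(x + η * I : ℂ)‖ := norm_pos_iff.mpr fun h => by simp [h, hη.ne] at him
  rw [him] at hmem
  exact ⟨hmem.1, hmem.2.trans (Real.log_le_log (by linarith [abs_nonneg x]) (by linarith))⟩

theorem deriv_le_exp_one_of_logPotential_comp_eq (hM : ∀ᵐ t ∂ν, |t| ≤ M)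
    (hν : MapsTo (logPotential ν) ℍₒ ℍₒ) (hd : 0 < d) (hF : HasDerivAt F d 0) (h0 : F 0 = x)
    (hx : |x| ≤ M) (hinv : ∀ᶠ w in 𝓝[ℍₒ] 0, F w ∈ ℍₒ ∧ logPotential ν (F w) = w + b) :
    d ≤ Real.exp 1 := by
  have hjulia := julia (G := fun z => logPotential ν z - b)
    ((differentiableOn_logPotential hM).sub_const _) (fun z hz => by simpa using (hν hz).le) hF h0
    (hinv.mono fun w hw => ⟨hw.1, by simp [hw.2]⟩)
    (add_mul_I_mem_upperHalfPlaneSet x (Real.exp_pos 1))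
  have him := (logPotential_add_mul_I_im_mem_Icc hM hx (Real.exp_pos 1)).1
  set Z := logPotential ν (x + Real.exp 1 * I) - b with hZ
  have hZim : 1 ≤ Z.im := by simpa [hZ] using him
  have hnormSq : Z.im ^ 2 ≤ normSq Z := by
    rw [normSq_apply]
    nlinarith [mul_self_nonneg Z.re]
  rw [normSq_add_mul_I_sub] at hjulia
  simp only [add_im, ofReal_im, mul_I_im, ofReal_re, zero_add] at hjulia
  have hscaled : Real.exp 1 * Z.im * (d * Z.im) ≤ Real.exp 1 * Z.im * Real.exp 1 := by
    have := (mul_le_mul_of_nonneg_left hnormSq (by positivity : 0 ≤ Real.exp 1 * d)).trans hjulia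
    linarith
  calc d ≤ d * Z.im := le_mul_of_one_le_right hd.le hZim
    _ ≤ Real.exp 1 := le_of_mul_le_mul_left hscaled (by positivity)

theorem third_order_bound_of_logPotential_comp_eq {a₂ a₃ : ℝ} (hM : ∀ᵐ t ∂ν, |t| ≤ M)
    (hν : MapsTo (logPotential ν) ℍₒ ℍₒ) (hb : b ∈ Icc (-π) 0) (hd : 0 < d)
    (hF : AnalyticAt ℂ F 0) (h0 : F 0 = x) (h1 : deriv F 0 = d) (h2 : iteratedDeriv 2 F 0 = a₂)
    (h3 : iteratedDeriv 3 F 0 = a₃) (hx : |x| ≤ M)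
    (hinv : ∀ᶠ w in 𝓝[ℍₒ] 0, F w ∈ ℍₒ ∧ logPotential ν (F w) = w + b)
    (hη : 0 < η) (hηπ : π ≤ Real.log η) :
    12 / η * ((2 * Real.log (η + 2 * M))⁻¹ - Real.exp 1 / η) * d ^ 3
      ≤ 3 * a₂ ^ 2 - 2 * d * a₃ := by
  have hz := add_mul_I_mem_upperHalfPlaneSet x hη
  have hschwarzian := schwarzian_lower_bound (G := fun z => logPotential ν z - b)
    ((differentiableOn_logPotential hM).sub_const _)
    (fun z hz => by simpa [UpperHalfPlane.upperHalfPlaneSet] using hν hz) hF hd h0 h1 h2 h3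
    (hinv.mono fun w hw => ⟨hw.1, by simp [hw.2]⟩) hz
  have hd' := deriv_le_exp_one_of_logPotential_comp_eq hM hν hd
    (h1 ▸ hF.differentiableAt.hasDerivAt) h0 hx hinv
  have him := logPotential_add_mul_I_im_mem_Icc hM hx hη
  have hre := logPotential_re_mem_Icc hM hz
  set Z := logPotential ν (x + η * I) - b with hZ
  replace him : Z.im ∈ Icc (Real.log η) (Real.log (η + 2 * M)) := by simpa [hZ] using him
  have hZre : |Z.re| ≤ Z.im := by
    rw [hZ, sub_re, ofReal_re, ← hZ, abs_le]
    constructor <;> linarith [hre.1, hre.2, hb.1, hb.2, him.1]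
  have hlow := inv_two_mul_le_im_div_normSq hZre
    (Real.pi_pos.trans_le (hηπ.trans him.1)) him.2
  rw [normSq_add_mul_I_sub] at hschwarzian
  simp only [add_im, ofReal_im, mul_I_im, ofReal_re, zero_add] at hschwarzian
  calc 12 / η * ((2 * Real.log (η + 2 * M))⁻¹ - Real.exp 1 / η) * d ^ 3
      ≤ 12 / η * (Z.im / normSq Z - d / η) * d ^ 3 := by gcongr
    _ = 12 * η * d ^ 3 * (Z.im / normSq Z - d * η / η ^ 2) / η ^ 2 := by field_simp
    _ ≤ 3 * a₂ ^ 2 - 2 * d * a₃ := (div_le_iff₀ (by positivity)).mpr hschwarzian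

end Herglotz

theorem exists_height (M : ℝ) :
    ∃ η > 0, π ≤ Real.log η ∧ Real.exp 1 / η < (2 * Real.log (η + 2 * M))⁻¹ := by
  have hshift : Tendsto (fun η : ℝ => η + 2 * M) atTop atTop :=
    tendsto_atTop_add_const_right _ _ tendsto_id
  have hlog := (Real.isLittleO_log_id_atTop.comp_tendsto hshift).bound
    (c := (8 * Real.exp 1)⁻¹) (by positivity)
  obtain ⟨η, hη0, hηM, hlog, hπ, hpos⟩ := ((eventually_gt_atTop 0).and
    ((eventually_gt_atTop (2 * |M|)).and (hlog.and
      ((Real.tendsto_log_atTop.eventually_ge_atTop π).and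
        ((Real.tendsto_log_atTop.comp hshift).eventually_gt_atTop 0))))).exists
  refine ⟨η, hη0, hπ, ?_⟩
  have hM := le_abs_self M
  have hM' := neg_abs_le M
  simp only [Function.comp_apply, id_eq, Real.norm_eq_abs] at hlog hpos
  rw [abs_of_pos hpos, abs_of_pos (by linarith), inv_mul_eq_div,
    le_div_iff₀ (by positivity)] at hlog
  rw [lt_inv_comm₀ (by positivity) (by positivity), inv_div, lt_div_iff₀ (Real.exp_pos 1)]
  linarith

variable {p : ℕ} [NeZero p] {Q : ℝ[X]} {e : Fin p → ℝ → ℝ} {M : ℝ}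

theorem IsBandFamily.exists_third_order_bound_of_deriv_pos (h : IsBandFamily Q e)
    (hM : ∀ j τ, |e j τ| ≤ M) :
    ∃ c > 0, ∀ (f : ℝ → ℝ) (θ : ℝ), AnalyticAt ℝ f 0 → 0 < deriv f 0 → |f 0| ≤ M →
      (∀ᶠ t in 𝓝 0, Q.eval (f t) = 2 * Real.cos (θ + p * t)) →
      c * deriv f 0 ^ 3 ≤ 3 * iteratedDeriv 2 f 0 ^ 2 + 2 * Real.exp 1 * |iteratedDeriv 3 f 0| := by
  obtain ⟨η, hη, hηπ, hηM⟩ := exists_height M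
  refine ⟨12 / η * ((2 * Real.log (η + 2 * M))⁻¹ - Real.exp 1 / η),
    mul_pos (by positivity) (sub_pos.mpr hηM), fun f θ hf hd hfM hfQ => ?_⟩
  have := isProbabilityMeasure_densityOfStates h.continuous
  have hae := ae_abs_le_densityOfStates h.continuous hM
  obtain ⟨F, hF, hreal, hderiv⟩ := exists_complexification hf
  have h0 : F 0 = f 0 := by simpa using hderiv 0
  have h1 : deriv F 0 = deriv f 0 := by simpa using hderiv 1
  rw [ofReal_zero] at hF hderiv
  obtain ⟨b, hb, hinv⟩ := h.exists_logPotential_comp_eq hM (θ := θ) hF hd h1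
    (hreal.mono fun t ht => by rw [ht, ofReal_im]) (by
      filter_upwards [hreal, hfQ] with t ht htQ
      rw [ht, ← coe_algebraMap, aeval_algebraMap_apply_eq_algebraMap_eval, htQ]
      simp)
  have hν : MapsTo (logPotential (densityOfStates e)) ℍₒ ℍₒ := fun z hz => h.logPotential_mem hM hz
  have hle := deriv_le_exp_one_of_logPotential_comp_eq hae hν hd
    (h1 ▸ hF.differentiableAt.hasDerivAt) h0 hfM hinv
  have habs : -(deriv f 0 * iteratedDeriv 3 f 0) ≤ Real.exp 1 * |iteratedDeriv 3 f 0| := by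
    have := mul_le_mul_of_nonneg_left (neg_le_abs (iteratedDeriv 3 f 0)) hd.le
    have := mul_le_mul_of_nonneg_right hle (abs_nonneg (iteratedDeriv 3 f 0))
    linarith
  linarith [third_order_bound_of_logPotential_comp_eq hae hν hb hd hF h0 h1 (hderiv 2) (hderiv 3)
    hfM hinv hη hηπ]

theorem IsBandFamily.exists_third_order_bound (h : IsBandFamily Q e) (hM : ∀ j τ, |e j τ| ≤ M) :
    ∃ c > 0, ∀ (f : ℝ → ℝ) (k : ℝ), AnalyticAt ℝ f k → deriv f k ≠ 0 → |f k| ≤ M →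
      (∀ᶠ t in 𝓝 k, Q.eval (f t) = 2 * Real.cos (p * t)) →
      c * |deriv f k| ^ 3
        ≤ 3 * iteratedDeriv 2 f k ^ 2 + 2 * Real.exp 1 * |iteratedDeriv 3 f k| := by
  obtain ⟨c, hc, hbound⟩ := h.exists_third_order_bound_of_deriv_pos hM
  refine ⟨c, hc, fun f k hf hd hfM hfQ => ?_⟩
  rcases hd.lt_or_gt with hneg | hpos
  · have htendsto : Tendsto (fun t => k - t) (𝓝 0) (𝓝 k) :=
      Continuous.tendsto' (by fun_prop) _ _ (sub_zero k)
    have hmain := hbound (fun t => f (k - t)) (-(p * k))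
      (AnalyticAt.comp (by simpa using hf) (by fun_prop))
      (by simpa [deriv_comp_const_sub] using hneg) (by simpa using hfM) (by
        filter_upwards [htendsto.eventually hfQ] with t ht
        rw [ht, ← Real.cos_neg]
        ring_nf)
    simpa [deriv_comp_const_sub, iteratedDeriv_comp_const_sub, abs_of_neg hneg] using hmain
  · have htendsto : Tendsto (fun t => k + t) (𝓝 0) (𝓝 k) :=
      Continuous.tendsto' (by fun_prop) _ _ (add_zero k)
    have hmain := hbound (fun t => f (k + t)) (p * k)
      (AnalyticAt.comp (by simpa using hf) (by fun_prop))
      (by simpa [deriv_comp_const_add] using hpos) (by simpa using hfM) (by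
        filter_upwards [htendsto.eventually hfQ] with t ht
        rw [ht, mul_add])
    simpa [deriv_comp_const_add, iteratedDeriv_comp_const_add, abs_of_pos hpos] using hmain

end UniformBound

section BandFunctions

open Polynomial

theorem exists_abs_le_of_abs_eval_le {Q : ℝ[X]} (hQ : 0 < Q.degree) (R : ℝ) :
    ∃ M, ∀ x, |Q.eval x| ≤ R → |x| ≤ M := by
  have hlarge := (Q.tendsto_norm_atTop hQ
    (tendsto_comap (f := fun x : ℝ => ‖x‖))).eventually_gt_atTop R
  obtain ⟨M, hM⟩ := eventually_atTop.mp (eventually_comap.mp hlarge)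
  refine ⟨M, fun x hx => ?_⟩
  by_contra! hxM
  exact (hM _ hxM.le x rfl).not_ge hx

theorem exists_pos_forall_abs_eval_le (P : ℝ[X]) (M : ℝ) :
    ∃ K > 0, ∀ x, |x| ≤ M → |P.eval x| ≤ K := by
  obtain ⟨K, hK⟩ := (isCompact_Icc (a := -M) (b := M)).exists_bound_of_continuousOn
    P.continuousOn
  exact ⟨max K 1, by positivity, fun x hx => (hK x (abs_le.mp hx)).trans (le_max_left _ _)⟩

theorem eventually_derivative_eval_mul_deriv {P : ℝ[X]} {f g : ℝ → ℝ} {k : ℝ}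
    (hf : AnalyticAt ℝ f k) (h : ∀ᶠ t in 𝓝 k, P.eval (f t) = g t) :
    ∀ᶠ t in 𝓝 k, P.derivative.eval (f t) * deriv f t = deriv g t := by
  filter_upwards [h.eventually_nhds, hf.eventually_analyticAt] with t ht hft
  rw [← EventuallyEq.deriv_eq ht]
  exact ((P.hasDerivAt (f t)).comp t hft.differentiableAt.hasDerivAt).deriv.symm

theorem derivative_derivative_eval_mul_deriv {Q : ℝ[X]} {f g : ℝ → ℝ} {k : ℝ}
    (hf : AnalyticAt ℝ f k) (h : ∀ᶠ t in 𝓝 k, Q.eval (f t) = g t) :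
    Q.derivative.derivative.eval (f k) * deriv f k ^ 2
      + Q.derivative.eval (f k) * iteratedDeriv 2 f k = iteratedDeriv 2 g k := by
  have hderiv := EventuallyEq.deriv_eq (eventually_derivative_eval_mul_deriv hf h)
  have hprod := ((Q.derivative.hasDerivAt (f k)).comp k hf.differentiableAt.hasDerivAt).mul
    hf.deriv.differentiableAt.hasDerivAt
  simp only [iteratedDeriv_succ, iteratedDeriv_zero]
  rw [← hderiv]
  refine Eq.trans ?_ hprod.deriv.symm
  rw [sq, ← mul_assoc, Function.comp_apply]

theorem abs_sin_le_and_abs_cos_le {Q : ℝ[X]} {f : ℝ → ℝ} {k K ω : ℝ} (hω : 1 ≤ ω)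
    (hf : AnalyticAt ℝ f k) (hfQ : ∀ᶠ t in 𝓝 k, Q.eval (f t) = 2 * Real.cos (ω * t))
    (hK₁ : |Q.derivative.eval (f k)| ≤ K) (hK₂ : |Q.derivative.derivative.eval (f k)| ≤ K) :
    |Real.sin (ω * k)| ≤ K * |deriv f k| ∧
      |Real.cos (ω * k)| ≤ K * (|deriv f k| ^ 2 + |iteratedDeriv 2 f k|) := by
  have hcos : iteratedDeriv 2 Real.cos = -Real.cos := by simp
  have h₁ : Q.derivative.eval (f k) * deriv f k = -(2 * ω * Real.sin (ω * k)) := by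
    rw [(eventually_derivative_eval_mul_deriv hf hfQ).self_of_nhds, ← iteratedDeriv_one,
      iteratedDeriv_const_mul_field, iteratedDeriv_comp_const_mul Real.contDiff_cos,
      iteratedDeriv_one, Real.deriv_cos']
    ring
  have h₂ : Q.derivative.derivative.eval (f k) * deriv f k ^ 2
      + Q.derivative.eval (f k) * iteratedDeriv 2 f k = -(2 * ω ^ 2 * Real.cos (ω * k)) := by
    rw [derivative_derivative_eval_mul_deriv hf hfQ, iteratedDeriv_const_mul_field,
      iteratedDeriv_comp_const_mul Real.contDiff_cos, hcos]
    simp only [Pi.neg_apply]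
    ring
  constructor
  · calc |Real.sin (ω * k)| ≤ 2 * ω * |Real.sin (ω * k)| :=
          le_mul_of_one_le_left (abs_nonneg _) (by linarith)
      _ = |Q.derivative.eval (f k)| * |deriv f k| := by
          rw [← abs_mul, h₁, abs_neg, abs_mul, abs_of_pos (by linarith : 0 < 2 * ω)]
      _ ≤ K * |deriv f k| := by gcongr
  · calc |Real.cos (ω * k)| ≤ 2 * ω ^ 2 * |Real.cos (ω * k)| :=
          le_mul_of_one_le_left (abs_nonneg _) (by nlinarith)
      _ = |Q.derivative.derivative.eval (f k) * deriv f k ^ 2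
            + Q.derivative.eval (f k) * iteratedDeriv 2 f k| := by
          rw [h₂, abs_neg, abs_mul, abs_of_pos (by nlinarith : 0 < 2 * ω ^ 2)]
      _ ≤ |Q.derivative.derivative.eval (f k)| * |deriv f k| ^ 2
            + |Q.derivative.eval (f k)| * |iteratedDeriv 2 f k| := by
          rw [← abs_pow, ← abs_mul, ← abs_mul]
          exact abs_add_le _ _
      _ ≤ K * |deriv f k| ^ 2 + K * |iteratedDeriv 2 f k| := by gcongr
      _ = K * (|deriv f k| ^ 2 + |iteratedDeriv 2 f k|) := by ring

/-- For small `d` and `a` the first two bounds contradict `sin² θ + cos² θ = 1`. -/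
theorem exists_pos_forall_le_add {K c A : ℝ} (hK : 0 < K) (hc : 0 < c) (hA : 0 ≤ A) :
    ∃ δ > 0, ∀ θ d a b : ℝ, 0 ≤ d → 0 ≤ a → 0 ≤ b → |Real.sin θ| ≤ K * d →
      |Real.cos θ| ≤ K * (d ^ 2 + a) → c * d ^ 3 ≤ 3 * a ^ 2 + A * b → δ ≤ a + b := by
  set r := min 1 (1 / (4 * K))
  have hr0 : 0 < r := by positivity
  have hr1 : r ≤ 1 := min_le_left _ _
  have hKr : K * r ≤ 1 / 4 := by
    calc K * r ≤ K * (1 / (4 * K)) := by gcongr; exact min_le_right _ _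
      _ = 1 / 4 := by field_simp
  refine ⟨min r (c * r ^ 3 / (3 + A)), by positivity,
    fun θ d a b hd ha hb hsin hcos hthird => ?_⟩
  by_contra! hlt
  obtain ⟨hltr, hltc⟩ := lt_min_iff.mp hlt
  have hdr : d < r := by
    by_contra! hrd
    rw [lt_div_iff₀ (by positivity)] at hltc
    have hcube : c * r ^ 3 ≤ c * d ^ 3 := by gcongr
    nlinarith
  have hsin' : |Real.sin θ| ≤ 1 / 4 := by nlinarith
  have hcos' : |Real.cos θ| ≤ 1 / 2 := by
    have hsmall : d ^ 2 + a ≤ 2 * r := by nlinarith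
    nlinarith
  have hsq := Real.sin_sq_add_cos_sq θ
  rw [← sq_abs, ← sq_abs (Real.cos θ)] at hsq
  nlinarith [abs_nonneg (Real.sin θ), abs_nonneg (Real.cos θ)]

theorem eval_eq_of_sub_C_eq_prod {ι : Type*} [Fintype ι] {Q : ℝ[X]} {a : ℝ} {x : ι → ℝ}
    (h : Q - C a = ∏ i, (X - C (x i))) (i : ι) : Q.eval (x i) = a := by
  have heval := congrArg (eval (x i)) h
  rw [eval_prod, Finset.prod_eq_zero (Finset.mem_univ i) (by simp)] at heval
  simpa [sub_eq_zero] using heval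

variable {p : ℕ} [NeZero p] {Q : ℝ[X]} {e : Fin p → ℝ → ℝ}

theorem IsBandFamily.degree_pos (h : IsBandFamily Q e) : 0 < Q.degree := by
  have hdeg := congrArg natDegree (h.sub_eq_prod 0)
  rw [natDegree_sub_C, natDegree_finsetProd_X_sub_C_eq_card] at hdeg
  rw [← natDegree_pos_iff_degree_pos, hdeg]
  simpa using NeZero.pos p

theorem IsBandFamily.exists_second_third_deriv_lower_bound (h : IsBandFamily Q e) :
    ∃ δ > 0, ∀ (f : ℝ → ℝ) (k : ℝ), AnalyticAt ℝ f k → Real.sin (p * k) ≠ 0 →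
      (∀ᶠ t in 𝓝 k, Q.eval (f t) = 2 * Real.cos (p * t)) →
      δ ≤ |iteratedDeriv 2 f k| + |iteratedDeriv 3 f k| := by
  obtain ⟨M, hM⟩ := exists_abs_le_of_abs_eval_le h.degree_pos 2
  have hspec : ∀ {x τ : ℝ}, Q.eval x = 2 * Real.cos τ → |x| ≤ M := fun {x τ} hx => hM x <| by
    rw [hx, abs_mul, abs_two]
    linarith [Real.abs_cos_le_one τ]
  obtain ⟨c, hc, hthird⟩ := h.exists_third_order_bound fun j τ =>
    hspec (eval_eq_of_sub_C_eq_prod (h.sub_eq_prod τ) j)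
  obtain ⟨K₁, hK₁, hQ₁⟩ := exists_pos_forall_abs_eval_le Q.derivative M
  obtain ⟨K₂, -, hQ₂⟩ := exists_pos_forall_abs_eval_le Q.derivative.derivative M
  obtain ⟨δ, hδ, hbound⟩ := exists_pos_forall_le_add (K := max K₁ K₂) (A := 2 * Real.exp 1)
    (by positivity) hc (by positivity)
  refine ⟨δ, hδ, fun f k hf hsin hfQ => ?_⟩
  have hfM : |f k| ≤ M := hspec hfQ.self_of_nhds
  obtain ⟨hs, hcos⟩ := abs_sin_le_and_abs_cos_le (by exact_mod_cast NeZero.one_le) hf hfQ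
    ((hQ₁ _ hfM).trans (le_max_left _ _)) ((hQ₂ _ hfM).trans (le_max_right _ _))
  have hd : deriv f k ≠ 0 := fun h0 => hsin (by simpa [h0] using hs)
  exact hbound _ _ _ _ (abs_nonneg _) (abs_nonneg _) (abs_nonneg _) hs hcos
    (by simpa using hthird f k hf hd hfM hfQ)

theorem isBandFamily_comp_arccos_cos {E : Fin p → ℝ → ℝ}
    (hcont : ∀ j, ContinuousOn (E j) (Icc 0 (π / p)))
    (hprod : ∀ k ∈ Icc 0 (π / p), Q - C (2 * Real.cos (p * k)) = ∏ j, (X - C (E j k))) :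
    IsBandFamily Q fun j τ => E j (Real.arccos (Real.cos τ) / p) := by
  have hp : (0 : ℝ) < p := Nat.cast_pos.mpr (NeZero.pos p)
  have hmem : ∀ τ : ℝ, Real.arccos (Real.cos τ) / p ∈ Icc 0 (π / p) := fun τ =>
    ⟨div_nonneg (Real.arccos_nonneg _) hp.le,
      div_le_div_of_nonneg_right (Real.arccos_le_pi _) hp.le⟩
  refine ⟨fun j => (hcont j).comp_continuous (by fun_prop) hmem, fun τ => ?_⟩
  rw [← hprod _ (hmem τ), mul_div_cancel₀ _ hp.ne',
    Real.cos_arccos (Real.neg_one_le_cos τ) (Real.cos_le_one τ)]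

theorem exists_discriminant {p : ℕ} (hp : 1 ≤ p) {V : ℤ → ℝ} {E : Fin p → ℝ → ℝ} {s : Set ℝ}
    (hs : s.Nonempty) (hchar : ∀ k ∈ s,
      (floquetMatrix p V k).charpoly = ∏ j, (X - C ((E j k : ℝ) : ℂ))) :
    ∃ Q : ℝ[X], ∀ k ∈ s, Q - C (2 * Real.cos (p * k)) = ∏ j, (X - C (E j k)) := by
  obtain ⟨Q, hQ⟩ := exists_charpoly_floquetMatrix_eq hp V
  obtain ⟨k₀, hk₀⟩ := hs
  have hreal : ∀ k ∈ s, (∏ j, (X - C (E j k))).map ofRealHom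
      = Q - C (2 * Complex.cos (p * k)) := fun k hk => by
    rw [← hQ, hchar k hk, Polynomial.map_prod]
    simp
  refine ⟨∏ j, (X - C (E j k₀)) + C (2 * Real.cos (p * k₀)), fun k hk => ?_⟩
  refine map_injective ofRealHom ofReal_injective ?_
  rw [hreal k hk, Polynomial.map_sub, Polynomial.map_add, hreal k₀ hk₀]
  simp

end BandFunctions

/-- **Corollary 2.2: uniform lower bound on `|E_j''| + |E_j'''|`.**
If `E_1 ≤ ⋯ ≤ E_p` are the band functions (continuous on `[0, π/p]`, real-analytic on
`(0, π/p)`, listing the eigenvalues of the Floquet matrix `H(k)` with multiplicity), then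
there is `δ > 0` with `|E_j''(k)| + |E_j'''(k)| ≥ δ` for all `j` and all `k ∈ (0, π/p)`. -/
theorem band_functions_second_third_derivative_lower_bound
    (p : ℕ) (hp : 1 ≤ p) (V : ℤ → ℝ) (hV : ∀ n : ℤ, V (n + p) = V n)
    (E : Fin p → ℝ → ℝ)
    (hcont : ∀ j : Fin p, ContinuousOn (E j) (Set.Icc 0 (π / p)))
    (hana : ∀ j : Fin p, AnalyticOnNhd ℝ (E j) (Set.Ioo 0 (π / p)))
    (hmono : ∀ k ∈ Set.Icc 0 (π / p), ∀ j j' : Fin p, j ≤ j' → E j k ≤ E j' k)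
    (hchar : ∀ k ∈ Set.Icc 0 (π / p),
      Matrix.charpoly (floquetMatrix p V k)
        = ∏ j : Fin p, (Polynomial.X - Polynomial.C ((E j k : ℝ) : ℂ))) :
    ∃ δ > 0, ∀ j : Fin p, ∀ k ∈ Set.Ioo 0 (π / p),
      δ ≤ |iteratedDeriv 2 (E j) k| + |iteratedDeriv 3 (E j) k| := by
  have : NeZero p := ⟨by lia⟩
  have hp0 : (0 : ℝ) < p := Nat.cast_pos.mpr hp
  obtain ⟨Q, hQ⟩ := exists_discriminant hp (Set.nonempty_Icc.mpr (by positivity)) hchar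
  obtain ⟨δ, hδ, hbound⟩ :=
    (isBandFamily_comp_arccos_cos hcont hQ).exists_second_third_deriv_lower_bound
  refine ⟨δ, hδ, fun j k hk => hbound (E j) k (hana j k hk) ?_ ?_⟩
  · exact (Real.sin_pos_of_pos_of_lt_pi (mul_pos hp0 hk.1)
      ((lt_div_iff₀' hp0).mp hk.2)).ne'
  · filter_upwards [isOpen_Ioo.mem_nhds hk] with t ht
    exact eval_eq_of_sub_C_eq_prod (hQ t (Set.Ioo_subset_Icc_self ht)) j
end

section
/- Let k ≥ 2 be an integer, let a < b be real, and let δ > 0. Suppose φ : (a, b) → ℝ is k times continuously differentiable with |φ^{(k)}(x)| ≥ δ for all x ∈ (a, b); suppose η : (a, b) → ℝ is twice differentiable with η''(x) = 0 for all x ∈ (a, b); and suppose ψ : [a, b] → ℂ is continuous on [a, b] and continuously differentiable on (a, b) with ψ' integrable on (a, b). Then for every real λ ≠ 0, | ∫_a^b e^{i(λφ(x) + η(x))} ψ(x) dx | ≤ C_k δ^{−1/k} ( |ψ(a)| + ∫_a^b |ψ'(x)| dx ) |λ|^{−1/k}, where C_k := 5·2^{k−1} − 2. -/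
/-!
For `k ≥ 2` the function `η` does not contribute to the `k`-th derivative of `f = λ φ + η`, so
`|f^{(k)}| ≥ μ` with `μ = |λ| δ`. The integrals of `e^{if}` are bounded by `C μ^{-1/k}` by induction
on `k`: as `f^{(k+1)}` has constant sign, `|f^{(k)}| ≥ μ τ` outside an interval of length `2 τ`, on
which the trivial bound costs `2 τ`. The choice `τ = μ^{-1/(k+1)}` gives `C_{k+1} = 2 C_k + 2`.

The induction starts at `k = 1` for monotone `f'`, where integration by parts gives `C_1 = 2`: since
`f'` has constant sign, the boundary terms `1 / |f'(a)|` and `1 / |f'(b)|` and the total variation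
of `1 / f'` add up to twice the larger boundary term. Hence `C_k = 2^{k+1} - 2`.

Finally, `ψ` enters through an integration by parts against the primitive of `e^{if}` that vanishes
at `b`, which leaves only the boundary term at `a`.
-/

open scoped ENNReal
open MeasureTheory intervalIntegral

section Calculus

open Set

lemma forall_pos_or_forall_neg_of_hasDerivAt {a b : ℝ} {f f' : ℝ → ℝ}
    (hf : ∀ x ∈ Ioo a b, HasDerivAt f (f' x) x) (hf' : ∀ x ∈ Ioo a b, f' x ≠ 0) :
    (∀ x ∈ Ioo a b, 0 < f' x) ∨ (∀ x ∈ Ioo a b, f' x < 0) :=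
  (hasDerivWithinAt_forall_lt_or_forall_gt_of_forall_ne (convex_Ioo a b)
    (fun x hx => (hf x hx).hasDerivWithinAt) hf').symm

lemma mul_sub_le_sub_of_hasDerivAt_of_le {a b C : ℝ} {f f' : ℝ → ℝ}
    (hf : ∀ x ∈ Ioo a b, HasDerivAt f (f' x) x) (hf' : ∀ x ∈ Ioo a b, C ≤ f' x) :
    ∀ x ∈ Ioo a b, ∀ y ∈ Ioo a b, x ≤ y → C * (y - x) ≤ f y - f x := by
  refine (convex_Ioo a b).mul_sub_le_image_sub_of_le_deriv
    (fun x hx => (hf x hx).continuousAt.continuousWithinAt) ?_ ?_ <;> rw [interior_Ioo]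
  · exact fun x hx => (hf x hx).differentiableAt.differentiableWithinAt
  · exact fun x hx => (hf x hx).deriv ▸ hf' x hx

lemma exists_forall_le_neg_and_forall_ge {a b μ τ : ℝ} (hab : a ≤ b) (hμ : 0 ≤ μ) (hτ : 0 ≤ τ)
    {g : ℝ → ℝ} (hg : ∀ x ∈ Ioo a b, ∀ y ∈ Ioo a b, x ≤ y → μ * (y - x) ≤ g y - g x) :
    ∃ z ∈ Icc a b, (∀ x ∈ Ioo a (z - τ), g x ≤ -(μ * τ)) ∧ ∀ x ∈ Ioo (z + τ) b, μ * τ ≤ g x := by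
  have hub : b ∈ upperBounds (insert a {x ∈ Ioo a b | g x < 0}) := by
    rintro x (rfl | ⟨hx, -⟩)
    exacts [hab, hx.2.le]
  obtain ⟨z, hz⟩ := Real.exists_isLUB (insert_nonempty a {x ∈ Ioo a b | g x < 0}) ⟨b, hub⟩
  have haz : a ≤ z := hz.1 (mem_insert _ _)
  have hzb : z ≤ b := hz.2 hub
  refine ⟨z, ⟨haz, hzb⟩, fun x hx => ?_, fun x hx => ?_⟩
  · obtain ⟨y, hyS, hxy, -⟩ := hz.exists_between (lt_sub_iff_add_lt.1 hx.2)
    obtain ⟨hy, hgy⟩ : y ∈ Ioo a b ∧ g y < 0 := hyS.resolve_left (by linarith [hx.1])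
    have hgrow := hg x ⟨hx.1, by linarith [hy.2]⟩ y hy (by linarith)
    have hτy : μ * τ ≤ μ * (y - x) := by gcongr; linarith
    linarith
  · have hw : x - τ ∈ Ioo a b := ⟨by linarith [hx.1], by linarith [hx.2]⟩
    have hgw : 0 ≤ g (x - τ) := by
      by_contra! hneg
      linarith [hz.1 (mem_insert_of_mem a ⟨hw, hneg⟩), hx.1]
    have hgrow := hg (x - τ) hw x ⟨by linarith [hw.1], hx.2⟩ (by linarith)
    rw [sub_sub_cancel] at hgrow
    linarith

variable {𝕜 G : Type*} [NontriviallyNormedField 𝕜] [NormedAddCommGroup G] [NormedSpace 𝕜 G]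
  {f : 𝕜 → G} {s : Set 𝕜}

lemma differentiableAt_iteratedDeriv_of_contDiffOn (hs : IsOpen s) {n : ℕ}
    (hf : ContDiffOn 𝕜 n f s) {j : ℕ} (hj : j < n) {x : 𝕜} (hx : x ∈ s) :
    DifferentiableAt 𝕜 (iteratedDeriv j f) x :=
  ((hf.differentiableOn_iteratedDerivWithin (mod_cast hj) hs.uniqueDiffOn).congr
    fun _ hy => (iteratedDerivWithin_of_isOpen hs hy).symm).differentiableAt (hs.mem_nhds hx)

lemma iteratedDeriv_eqOn_zero_of_hasDerivAt_deriv_zero (hs : IsOpen s)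
    (hf : ∀ x ∈ s, HasDerivAt (deriv f) 0 x) {n : ℕ} (hn : 2 ≤ n) :
    EqOn (iteratedDeriv n f) 0 s := by
  induction n, hn using Nat.le_induction with
  | base =>
    intro x hx
    rw [iteratedDeriv_succ, iteratedDeriv_one, (hf x hx).deriv, Pi.zero_apply]
  | succ n _ ih =>
    rw [iteratedDeriv_succ]
    exact (ih.deriv hs).trans fun x _ => by simp

lemma differentiableAt_iteratedDeriv_of_hasDerivAt_deriv_zero (hs : IsOpen s)
    (hf : ∀ x ∈ s, DifferentiableAt 𝕜 f x) (hf' : ∀ x ∈ s, HasDerivAt (deriv f) 0 x) (j : ℕ)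
    {x : 𝕜} (hx : x ∈ s) : DifferentiableAt 𝕜 (iteratedDeriv j f) x := by
  match j with
  | 0 => simpa only [iteratedDeriv_zero] using hf x hx
  | 1 => simpa only [iteratedDeriv_one] using (hf' x hx).differentiableAt
  | j + 2 =>
    have hzero : EqOn (iteratedDeriv (j + 2) f) (fun _ => 0) s :=
      iteratedDeriv_eqOn_zero_of_hasDerivAt_deriv_zero hs hf' (by omega)
    exact (hzero.eventuallyEq_of_mem (hs.mem_nhds hx)).differentiableAt_iff.2
      (differentiableAt_const _)

end Calculus

section IntervalIntegral

open Set

variable {V : Type*} [NormedAddCommGroup V]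

lemma intervalIntegrable_of_continuousOn_Ioo_of_norm_le {f : ℝ → V} {a b C : ℝ} (hab : a ≤ b)
    (hf : ContinuousOn f (Ioo a b)) (hC : ∀ x ∈ Ioo a b, ‖f x‖ ≤ C) :
    IntervalIntegrable f volume a b :=
  (intervalIntegrable_iff_integrableOn_Ioo_of_le hab).2 <|
    .of_bound measure_Ioo_lt_top (hf.aestronglyMeasurable measurableSet_Ioo) C <|
      (ae_restrict_iff' measurableSet_Ioo).2 (.of_forall hC)

lemma norm_integral_le_of_forall_Ioo [NormedSpace ℝ V] {f : ℝ → V} {a b M : ℝ} (hab : a < b)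
    (hf : IntervalIntegrable f volume a b)
    (hM : ∀ c ∈ Ioo a b, ∀ d ∈ Ioo a b, c ≤ d → ‖∫ x in c..d, f x‖ ≤ M) :
    ‖∫ x in a..b, f x‖ ≤ M := by
  set P : ℝ → V := fun x => ∫ t in a..x, f t
  have hPc : ContinuousOn P (Icc a b) := by
    simpa only [uIcc_of_le hab.le] using
      continuousOn_primitive_interval' hf left_mem_uIcc
  have hfa : ∀ c ∈ Ioo a b, IntervalIntegrable f volume a c := fun c hc =>
    hf.mono_set (uIcc_subset_uIcc_left (uIcc_of_le hab.le ▸ Ioo_subset_Icc_self hc))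
  have hPM : ∀ p ∈ Ioo a b ×ˢ Ioo a b, ‖P p.2 - P p.1‖ ≤ M := by
    rintro ⟨c, d⟩ ⟨hc, hd⟩
    rcases le_total c d with h | h
    · simpa only [P, integral_interval_sub_left (hfa d hd) (hfa c hc)] using hM c hc d hd h
    · rw [norm_sub_rev]
      simpa only [P, integral_interval_sub_left (hfa c hc) (hfa d hd)] using hM d hd c hc h
  have hcl : closure (Ioo a b ×ˢ Ioo a b) = Icc a b ×ˢ Icc a b := by
    rw [closure_prod_eq, closure_Ioo hab.ne]
  have hcont : ContinuousOn (fun p : ℝ × ℝ => ‖P p.2 - P p.1‖) (Icc a b ×ˢ Icc a b) :=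
    ((hPc.comp continuousOn_snd fun _ hp => hp.2).sub
      (hPc.comp continuousOn_fst fun _ hp => hp.1)).norm
  have hab' : (a, b) ∈ closure (Ioo a b ×ˢ Ioo a b) :=
    hcl ▸ ⟨left_mem_Icc.2 hab.le, right_mem_Icc.2 hab.le⟩
  simpa [P] using le_on_closure hPM (hcl.symm ▸ hcont) continuousOn_const hab'

lemma norm_integral_le_add_of_norm_le_one [NormedSpace ℝ V] {f : ℝ → V} {a b z τ B : ℝ}
    (hτ : 0 ≤ τ) (hz : z ∈ Icc a b) (hf : IntervalIntegrable f volume a b)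
    (hf1 : ∀ x, ‖f x‖ ≤ 1) (hleft : ‖∫ x in a..max a (z - τ), f x‖ ≤ B)
    (hright : ‖∫ x in min b (z + τ)..b, f x‖ ≤ B) :
    ‖∫ x in a..b, f x‖ ≤ 2 * B + 2 * τ := by
  set p := max a (z - τ)
  set q := min b (z + τ)
  have hap : a ≤ p := le_max_left _ _
  have hqb : q ≤ b := min_le_left _ _
  have hpz : p ≤ z := max_le hz.1 (by linarith)
  have hzq : z ≤ q := le_min hz.2 (by linarith)
  have hint : ∀ c ∈ Icc a b, ∀ d ∈ Icc a b, IntervalIntegrable f volume c d := fun c hc d hd =>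
    hf.mono_set (uIcc_of_le (hz.1.trans hz.2) ▸ uIcc_subset_Icc hc hd)
  have ha : a ∈ Icc a b := ⟨le_rfl, by linarith⟩
  have hp : p ∈ Icc a b := ⟨hap, by linarith⟩
  have hq : q ∈ Icc a b := ⟨by linarith, hqb⟩
  have hb : b ∈ Icc a b := ⟨by linarith, le_rfl⟩
  have hmid : ‖∫ x in p..q, f x‖ ≤ 2 * τ :=
    calc ‖∫ x in p..q, f x‖ ≤ 1 * |q - p| := norm_integral_le_of_norm_le_const fun x _ => hf1 x
      _ = q - p := by rw [one_mul, abs_of_nonneg (by linarith)]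
      _ ≤ 2 * τ := by linarith [le_max_right a (z - τ), min_le_right b (z + τ)]
  rw [← integral_add_adjacent_intervals (hint a ha q hq) (hint q hq b hb),
    ← integral_add_adjacent_intervals (hint a ha p hp) (hint p hp q hq)]
  exact norm_add₃_le.trans (by linarith)

lemma norm_integral_smul_le_of_norm_integral_le {𝕜 : Type*} [RCLike 𝕜] [NormedSpace 𝕜 V]
    [NormedSpace ℝ V] [IsScalarTower ℝ 𝕜 V] [CompleteSpace V] {E : ℝ → 𝕜} {ψ ψ' : ℝ → V}
    {a b M : ℝ} (hab : a ≤ b) (hE : IntervalIntegrable E volume a b)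
    (hEc : ContinuousOn E (Ioo a b)) (hM : ∀ x ∈ Icc a b, ‖∫ t in x..b, E t‖ ≤ M)
    (hψ : ContinuousOn ψ (Icc a b)) (hψd : ∀ x ∈ Ioo a b, HasDerivAt ψ (ψ' x) x)
    (hψ' : IntervalIntegrable ψ' volume a b) :
    ‖∫ x in a..b, E x • ψ x‖ ≤ M * (‖ψ a‖ + ∫ x in a..b, ‖ψ' x‖) := by
  set P : ℝ → 𝕜 := fun x => ∫ t in x..b, E t
  have hI : uIcc a b = Icc a b := uIcc_of_le hab
  have hP : ContinuousOn P (uIcc a b) :=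
    continuousOn_primitive_interval_left ((intervalIntegrable_iff' (by simp)).1 hE)
  have hP' : ∀ x ∈ Ioo a b, HasDerivAt P (-E x) x := fun x hx =>
    integral_hasDerivAt_left (hE.mono_set (uIcc_subset_uIcc_right (hI ▸ Ioo_subset_Icc_self hx)))
      (hEc.stronglyMeasurableAtFilter isOpen_Ioo x hx) (hEc.continuousAt (Ioo_mem_nhds hx.1 hx.2))
  have hparts : ∫ x in a..b, E x • ψ x = P a • ψ a + ∫ x in a..b, P x • ψ' x := by
    have h := integral_smul_deriv_eq_deriv_smul_of_hasDerivAt hP (hI.symm ▸ hψ)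
      (by rwa [min_eq_left hab, max_eq_right hab]) (by rwa [min_eq_left hab, max_eq_right hab])
      hE.neg hψ'
    simp [h, P]
  have hrem : ‖∫ x in a..b, P x • ψ' x‖ ≤ ∫ x in a..b, M * ‖ψ' x‖ :=
    norm_integral_le_of_norm_le hab (.of_forall fun x hx => by
      rw [norm_smul]; gcongr; exact hM x (Ioc_subset_Icc_self hx)) (hψ'.norm.const_mul M)
  calc ‖∫ x in a..b, E x • ψ x‖ ≤ ‖P a‖ * ‖ψ a‖ + ‖∫ x in a..b, P x • ψ' x‖ := by
        rw [hparts, ← norm_smul]; exact norm_add_le _ _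
    _ ≤ M * ‖ψ a‖ + M * ∫ x in a..b, ‖ψ' x‖ := by
        rw [← intervalIntegral.integral_const_mul]
        gcongr
        exact hM a (left_mem_Icc.2 hab)
    _ = M * (‖ψ a‖ + ∫ x in a..b, ‖ψ' x‖) := by ring

lemma norm_integral_smul_deriv_le_of_deriv_nonneg [NormedSpace ℝ V] [CompleteSpace V] {a b : ℝ}
    (hab : a ≤ b) {g g' : ℝ → ℝ} {E E' : ℝ → V} (hg : ∀ x ∈ Icc a b, HasDerivAt g (g' x) x)
    (hE : ∀ x ∈ Icc a b, HasDerivAt E (E' x) x) (hg' : ∀ x ∈ Icc a b, 0 ≤ g' x)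
    (hE1 : ∀ x ∈ Icc a b, ‖E x‖ ≤ 1) (hE' : IntervalIntegrable E' volume a b) :
    ‖∫ x in a..b, g x • E' x‖ ≤ |g a| + |g b| + (g b - g a) := by
  rw [← uIcc_of_le hab] at hg hE hg'
  have hg'int : IntervalIntegrable g' volume a b :=
    intervalIntegrable_deriv_of_nonneg (fun x hx => (hg x hx).continuousAt.continuousWithinAt)
      (fun x hx => hg x (Ioo_subset_Icc_self hx)) fun x hx => hg' x (Ioo_subset_Icc_self hx)
  have hbdry : ∀ x ∈ Icc a b, ‖g x • E x‖ ≤ |g x| := fun x hx => by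
    rw [norm_smul, Real.norm_eq_abs]
    exact mul_le_of_le_one_right (abs_nonneg _) (hE1 x hx)
  have hrem : ‖∫ x in a..b, g' x • E x‖ ≤ g b - g a := by
    rw [← integral_eq_sub_of_hasDerivAt hg hg'int]
    refine norm_integral_le_of_norm_le hab (.of_forall fun x hx => ?_) hg'int
    have hx' := Ioc_subset_Icc_self hx
    have hnonneg := hg' x (uIcc_of_le hab ▸ hx')
    rw [norm_smul, Real.norm_of_nonneg hnonneg]
    exact mul_le_of_le_one_right hnonneg (hE1 x hx')
  rw [integral_smul_deriv_eq_deriv_smul hg hE hg'int hE', add_comm |g a|]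
  exact (norm_sub_le _ _).trans (add_le_add ((norm_sub_le _ _).trans (add_le_add
    (hbdry b (right_mem_Icc.2 hab)) (hbdry a (left_mem_Icc.2 hab)))) hrem)

end IntervalIntegral

section VanDerCorput

open Set

lemma intervalIntegrable_exp_of_continuousOn {f : ℝ → ℝ} {a b : ℝ} (hab : a ≤ b)
    (hf : ContinuousOn f (Ioo a b)) :
    IntervalIntegrable (fun x => Complex.exp (Complex.I * (f x : ℂ))) volume a b :=
  intervalIntegrable_of_continuousOn_Ioo_of_norm_le hab (by fun_prop)
    fun x _ => (Complex.norm_exp_I_mul_ofReal (f x)).le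

lemma norm_integral_exp_neg (f : ℝ → ℝ) (a b : ℝ) :
    ‖∫ x in a..b, Complex.exp (Complex.I * ((-f x : ℝ) : ℂ))‖ =
      ‖∫ x in a..b, Complex.exp (Complex.I * (f x : ℂ))‖ := by
  rw [← Complex.norm_conj, ← intervalIntegral_conj]
  simp [← Complex.exp_conj]

lemma norm_integral_exp_le_of_deriv2_nonneg {a b : ℝ} (hab : a ≤ b) {f f' f'' : ℝ → ℝ}
    (hf : ∀ x ∈ Icc a b, HasDerivAt f (f' x) x) (hf' : ∀ x ∈ Icc a b, HasDerivAt f' (f'' x) x)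
    (hne : ∀ x ∈ Icc a b, f' x ≠ 0) (hf'' : ∀ x ∈ Icc a b, 0 ≤ f'' x) :
    ‖∫ x in a..b, Complex.exp (Complex.I * (f x : ℂ))‖ ≤
      |(f' a)⁻¹| + |(f' b)⁻¹| + ((f' a)⁻¹ - (f' b)⁻¹) := by
  set E : ℝ → ℂ := fun x => Complex.exp (Complex.I * (f x : ℂ))
  have hE : ∀ x ∈ Icc a b, HasDerivAt E (E x * (Complex.I * f' x)) x := fun x hx =>
    ((hf x hx).ofReal_comp.const_mul Complex.I).cexp
  have hE' : IntervalIntegrable (fun x => E x * (Complex.I * f' x)) volume a b := by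
    have hfc : ContinuousOn f (Icc a b) := fun x hx => (hf x hx).continuousAt.continuousWithinAt
    have hfc' : ContinuousOn f' (Icc a b) := fun x hx =>
      (hf' x hx).continuousAt.continuousWithinAt
    exact ContinuousOn.intervalIntegrable_of_Icc hab (by fun_prop)
  have hg : ∀ x ∈ Icc a b, HasDerivAt (fun x => -(f' x)⁻¹) (f'' x / f' x ^ 2) x := fun x hx =>
    ((hf' x hx).inv (hne x hx)).neg.congr_deriv (by ring)
  have hcongr : ∀ x ∈ uIcc a b, E x = Complex.I * (-(f' x)⁻¹ • (E x * (Complex.I * f' x))) := by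
    intro x hx
    have : (f' x : ℂ) ≠ 0 := mod_cast hne x (uIcc_of_le hab ▸ hx)
    rw [Complex.real_smul]
    push_cast
    field_simp
    rw [Complex.I_sq]
    ring
  rw [integral_congr hcongr, intervalIntegral.integral_const_mul, norm_mul, Complex.norm_I, one_mul]
  refine (norm_integral_smul_deriv_le_of_deriv_nonneg hab hg hE
    (fun x hx => div_nonneg (hf'' x hx) (sq_nonneg _))
    (fun x _ => (Complex.norm_exp_I_mul_ofReal (f x)).le) hE').trans_eq ?_
  rw [abs_neg, abs_neg]
  ring

lemma norm_integral_exp_le_two_div_of_deriv2_nonneg {a b ν : ℝ} (hab : a ≤ b) (hν : 0 < ν)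
    {f f' f'' : ℝ → ℝ} (hf : ∀ x ∈ Ioo a b, HasDerivAt f (f' x) x)
    (hf' : ∀ x ∈ Ioo a b, HasDerivAt f' (f'' x) x) (hlow : ∀ x ∈ Ioo a b, ν ≤ |f' x|)
    (hf'' : ∀ x ∈ Ioo a b, 0 ≤ f'' x) :
    ‖∫ x in a..b, Complex.exp (Complex.I * (f x : ℂ))‖ ≤ 2 / ν := by
  rcases hab.eq_or_lt with rfl | hab
  · rw [integral_same, norm_zero]
    positivity
  have hne : ∀ x ∈ Ioo a b, f' x ≠ 0 := fun x hx => abs_pos.1 (hν.trans_le (hlow x hx))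
  have hinv : ∀ x ∈ Ioo a b, |(f' x)⁻¹| ≤ 1 / ν := fun x hx => by
    rw [abs_inv, ← one_div]
    exact one_div_le_one_div_of_le hν (hlow x hx)
  refine norm_integral_le_of_forall_Ioo hab (intervalIntegrable_exp_of_continuousOn hab.le
    fun x hx => (hf x hx).continuousAt.continuousWithinAt) fun c hc d hd hcd => ?_
  have hsub : Icc c d ⊆ Ioo a b := Icc_subset_Ioo hc.1 hd.2
  refine (norm_integral_exp_le_of_deriv2_nonneg hcd (fun x hx => hf x (hsub hx))
    (fun x hx => hf' x (hsub hx)) (fun x hx => hne x (hsub hx))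
    fun x hx => hf'' x (hsub hx)).trans ?_
  have hνc := hinv c hc
  have hνd := hinv d hd
  have htwo : 2 / ν = 1 / ν + 1 / ν := by ring
  rcases forall_pos_or_forall_neg_of_hasDerivAt hf hne with hpos | hneg
  · rw [abs_of_pos (inv_pos.2 (hpos c hc))] at hνc ⊢
    rw [abs_of_pos (inv_pos.2 (hpos d hd))]
    linarith
  · rw [abs_of_neg (inv_lt_zero.2 (hneg d hd))] at hνd ⊢
    rw [abs_of_neg (inv_lt_zero.2 (hneg c hc))]
    linarith

lemma norm_integral_exp_le_two_div {a b ν : ℝ} (hab : a ≤ b) (hν : 0 < ν) {f f' f'' : ℝ → ℝ}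
    (hf : ∀ x ∈ Ioo a b, HasDerivAt f (f' x) x) (hf' : ∀ x ∈ Ioo a b, HasDerivAt f' (f'' x) x)
    (hlow : ∀ x ∈ Ioo a b, ν ≤ |f' x|)
    (hf'' : (∀ x ∈ Ioo a b, 0 ≤ f'' x) ∨ (∀ x ∈ Ioo a b, f'' x ≤ 0)) :
    ‖∫ x in a..b, Complex.exp (Complex.I * (f x : ℂ))‖ ≤ 2 / ν := by
  rcases hf'' with hnonneg | hnonpos
  · exact norm_integral_exp_le_two_div_of_deriv2_nonneg hab hν hf hf' hlow hnonneg
  · rw [← norm_integral_exp_neg]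
    exact norm_integral_exp_le_two_div_of_deriv2_nonneg hab hν (fun x hx => (hf x hx).neg)
      (fun x hx => (hf' x hx).neg) (by simpa only [abs_neg] using hlow)
      fun x hx => neg_nonneg.2 (hnonpos x hx)

lemma mul_rpow_neg_one_div_succ {μ : ℝ} (hμ : 0 < μ) {k : ℕ} (hk : k ≠ 0) :
    (μ * μ ^ (-(1 / ((k + 1 : ℕ) : ℝ)))) ^ (-(1 / (k : ℝ))) = μ ^ (-(1 / ((k + 1 : ℕ) : ℝ))) := by
  have hk' : (k : ℝ) ≠ 0 := mod_cast hk
  have hexp : (1 + -(1 / ((k + 1 : ℕ) : ℝ))) * -(1 / (k : ℝ)) = -(1 / ((k + 1 : ℕ) : ℝ)) := by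
    push_cast
    field_simp
    ring
  nth_rewrite 1 [← Real.rpow_one μ]
  rw [← Real.rpow_add hμ, ← Real.rpow_mul hμ.le, hexp]

lemma norm_integral_le_of_hasDerivAt_of_le_abs {V : Type*} [NormedAddCommGroup V]
    [NormedSpace ℝ V] {a b μ B : ℝ} (hab : a ≤ b) (hμ : 0 < μ) {k : ℕ} (hk : k ≠ 0) {E : ℝ → V}
    (hE : ∀ x, ‖E x‖ ≤ 1) (hEint : IntervalIntegrable E volume a b)
    {g g' : ℝ → ℝ} (hg : ∀ x ∈ Ioo a b, HasDerivAt g (g' x) x) (hg' : ∀ x ∈ Ioo a b, μ ≤ |g' x|)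
    (hB : ∀ p q ν, a ≤ p → p ≤ q → q ≤ b → 0 < ν → (∀ x ∈ Ioo p q, ν ≤ |g x|) →
      ‖∫ x in p..q, E x‖ ≤ B * ν ^ (-(1 / (k : ℝ)))) :
    ‖∫ x in a..b, E x‖ ≤ (2 * B + 2) * μ ^ (-(1 / ((k + 1 : ℕ) : ℝ))) := by
  wlog hpos : ∀ x ∈ Ioo a b, 0 < g' x generalizing g g' with hwlog
  · have hneg := (forall_pos_or_forall_neg_of_hasDerivAt hg fun x hx =>
      abs_pos.1 (hμ.trans_le (hg' x hx))).resolve_left hpos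
    exact hwlog (fun x hx => (hg x hx).neg) (by simpa only [abs_neg] using hg')
      (by simpa only [Pi.neg_apply, abs_neg] using hB) fun x hx => neg_pos.2 (hneg x hx)
  -- With this `τ` the trivial bound `2 * τ` near `z` balances `B * (μ * τ) ^ (-1 / k)` elsewhere.
  set τ := μ ^ (-(1 / ((k + 1 : ℕ) : ℝ))) with hτdef
  have hτ : 0 < τ := Real.rpow_pos_of_pos hμ _
  have hgrow := mul_sub_le_sub_of_hasDerivAt_of_le hg fun x hx =>
    (hg' x hx).trans_eq (abs_of_pos (hpos x hx))
  obtain ⟨z, hz, hleft, hright⟩ := exists_forall_le_neg_and_forall_ge hab hμ.le hτ.le hgrow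
  have hpiece : ∀ p q, a ≤ p → p ≤ q → q ≤ b → (∀ x ∈ Ioo p q, μ * τ ≤ |g x|) →
      ‖∫ x in p..q, E x‖ ≤ B * τ := fun p q hp hpq hq h => by
    simpa only [hτdef, mul_rpow_neg_one_div_succ hμ hk] using
      hB p q (μ * τ) hp hpq hq (mul_pos hμ hτ) h
  have hsplit : ‖∫ x in a..b, E x‖ ≤ 2 * (B * τ) + 2 * τ := by
    refine norm_integral_le_add_of_norm_le_one hτ.le hz hEint hE ?_ ?_
    · refine hpiece _ _ le_rfl (le_max_left _ _) (max_le hab (by linarith [hz.2])) fun x hx => ?_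
      have hx' := (lt_max_iff.1 hx.2).resolve_left hx.1.not_gt
      exact (le_neg_of_le_neg (hleft x ⟨hx.1, hx'⟩)).trans (neg_le_abs _)
    · refine hpiece _ _ (le_min hab (by linarith [hz.1])) (min_le_left _ _) le_rfl fun x hx => ?_
      have hx' := (min_lt_iff.1 hx.1).resolve_left hx.2.not_gt
      exact (hright x ⟨hx', hx.2⟩).trans (le_abs_self _)
  linarith

lemma norm_integral_exp_le_rpow {F : ℕ → ℝ → ℝ} {k : ℕ} (hk : 2 ≤ k) {a b μ : ℝ} (hab : a ≤ b)
    (hμ : 0 < μ) (hF : ∀ j < k, ∀ x ∈ Ioo a b, HasDerivAt (F j) (F (j + 1) x) x)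
    (hlow : ∀ x ∈ Ioo a b, μ ≤ |F k x|) :
    ‖∫ x in a..b, Complex.exp (Complex.I * (F 0 x : ℂ))‖ ≤
      (2 ^ (k + 1) - 2) * μ ^ (-(1 / (k : ℝ))) := by
  have hnorm : ∀ x, ‖Complex.exp (Complex.I * (F 0 x : ℂ))‖ ≤ 1 := fun x =>
    (Complex.norm_exp_I_mul_ofReal (F 0 x)).le
  have hint := intervalIntegrable_exp_of_continuousOn hab fun x hx =>
    (hF 0 (by omega) x hx).continuousAt.continuousWithinAt
  induction k, hk using Nat.le_induction generalizing a b μ with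
  | base =>
    have hsign : (∀ x ∈ Ioo a b, 0 ≤ F 2 x) ∨ (∀ x ∈ Ioo a b, F 2 x ≤ 0) :=
      (forall_pos_or_forall_neg_of_hasDerivAt (hF 1 one_lt_two) fun x hx =>
        abs_pos.1 (hμ.trans_le (hlow x hx))).imp (fun h x hx => (h x hx).le)
          fun h x hx => (h x hx).le
    refine (norm_integral_le_of_hasDerivAt_of_le_abs (B := 2) hab hμ one_ne_zero hnorm hint
      (hF 1 one_lt_two) hlow fun p q ν hp hpq hq hν h => ?_).trans_eq (by norm_num)
    have hsub : Ioo p q ⊆ Ioo a b := Ioo_subset_Ioo hp hq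
    simpa [Real.rpow_neg_one, div_eq_mul_inv] using
      norm_integral_exp_le_two_div hpq hν (fun x hx => hF 0 two_pos x (hsub hx))
        (fun x hx => hF 1 one_lt_two x (hsub hx)) h
        (hsign.imp (fun h x hx => h x (hsub hx)) fun h x hx => h x (hsub hx))
  | succ k hk ih =>
    refine (norm_integral_le_of_hasDerivAt_of_le_abs (k := k) (B := 2 ^ (k + 1) - 2) hab hμ
      (by omega) hnorm hint (hF k k.lt_succ_self) hlow
      fun p q ν hp hpq hq hν h => ?_).trans_eq (by ring)
    have hsub : Ioo p q ⊆ Ioo a b := Ioo_subset_Ioo hp hq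
    exact ih hpq hν (fun j hj x hx => hF j (by omega) x (hsub hx)) h
      (hint.mono_set (by rw [uIcc_of_le hpq, uIcc_of_le hab]; exact Icc_subset_Icc hp hq))

end VanDerCorput

lemma two_pow_succ_le_five_mul_two_pow_pred {k : ℕ} (hk : k ≠ 0) :
    (2 : ℝ) ^ (k + 1) ≤ 5 * 2 ^ (k - 1) := by
  obtain ⟨m, rfl⟩ := Nat.exists_eq_succ_of_ne_zero hk
  rw [Nat.succ_sub_one, Nat.succ_eq_add_one, pow_add, pow_add]
  linarith [pow_pos (two_pos (α := ℝ)) m]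

theorem van_der_corput_affine_phase_general {V : Type*} [NormedAddCommGroup V] [NormedSpace ℂ V]
    [CompleteSpace V] {k : ℕ} (hk : 2 ≤ k) {a b : ℝ} (hab : a ≤ b) {δ : ℝ} (hδ : 0 < δ)
    {φ η : ℝ → ℝ}
    (hφ : ∀ j < k, ∀ x ∈ Set.Ioo a b, DifferentiableAt ℝ (iteratedDeriv j φ) x)
    (hφk : ∀ x ∈ Set.Ioo a b, δ ≤ |iteratedDeriv k φ x|)
    (hη : ∀ j < k, ∀ x ∈ Set.Ioo a b, DifferentiableAt ℝ (iteratedDeriv j η) x)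
    (hηk : ∀ x ∈ Set.Ioo a b, iteratedDeriv k η x = 0)
    {ψ ψ' : ℝ → V} (hψ : ContinuousOn ψ (Set.Icc a b))
    (hψd : ∀ x ∈ Set.Ioo a b, HasDerivAt ψ (ψ' x) x) (hψ' : IntervalIntegrable ψ' volume a b)
    {l : ℝ} (hl : l ≠ 0) :
    ‖∫ x in a..b, Complex.exp (Complex.I * ((l * φ x + η x : ℝ) : ℂ)) • ψ x‖
      ≤ (2 ^ (k + 1) - 2) * δ ^ (-(1 / (k : ℝ)))
          * (‖ψ a‖ + ∫ x in a..b, ‖ψ' x‖) * |l| ^ (-(1 / (k : ℝ))) := by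
  let F : ℕ → ℝ → ℝ := fun j x => l * iteratedDeriv j φ x + iteratedDeriv j η x
  have hF : ∀ j < k, ∀ x ∈ Set.Ioo a b, HasDerivAt (F j) (F (j + 1) x) x := fun j hj x hx => by
    simpa only [F, iteratedDeriv_succ] using
      ((hφ j hj x hx).hasDerivAt.const_mul l).fun_add (hη j hj x hx).hasDerivAt
  have hlow : ∀ x ∈ Set.Ioo a b, |l| * δ ≤ |F k x| := fun x hx => by
    simpa only [F, hηk x hx, add_zero, abs_mul] using
      mul_le_mul_of_nonneg_left (hφk x hx) (abs_nonneg l)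
  have hF0 : ContinuousOn (F 0) (Set.Ioo a b) := fun x hx =>
    (hF 0 (by omega) x hx).continuousAt.continuousWithinAt
  have hM : ∀ x ∈ Set.Icc a b, ‖∫ t in x..b, Complex.exp (Complex.I * (F 0 t : ℂ))‖ ≤
      (2 ^ (k + 1) - 2) * (|l| * δ) ^ (-(1 / (k : ℝ))) := fun x hx => by
    have hsub : Set.Ioo x b ⊆ Set.Ioo a b := Set.Ioo_subset_Ioo_left hx.1
    exact norm_integral_exp_le_rpow hk hx.2 (by positivity)
      (fun j hj y hy => hF j hj y (hsub hy)) fun y hy => hlow y (hsub hy)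
  convert norm_integral_smul_le_of_norm_integral_le hab
    (intervalIntegrable_exp_of_continuousOn hab hF0) (by fun_prop) hM hψ hψd hψ' using 1
  · simp only [F, iteratedDeriv_zero]
  · rw [Real.mul_rpow (abs_nonneg l) hδ.le]
    ring

/-- **Modified van der Corput lemma (Lemma A.1).**
If `|φ^{(k)}| ≥ δ` on `(a,b)` for some `k ≥ 2`, `η'' ≡ 0` on `(a,b)`, and `ψ` is `C¹` on
`(a,b)` and continuous on `[a,b]` with integrable derivative, then for `λ ≠ 0`,
`|∫_a^b e^{i(λφ + η)} ψ| ≤ C_k δ^{-1/k} (|ψ(a)| + ∫_a^b |ψ'|) |λ|^{-1/k}`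
with `C_k = 5·2^{k-1} - 2`. -/
theorem van_der_corput_affine_phase
    (k : ℕ) (hk : 2 ≤ k) (a b : ℝ) (hab : a < b) (δ : ℝ) (hδ : 0 < δ)
    (φ : ℝ → ℝ) (hφ : ContDiffOn ℝ k φ (Set.Ioo a b))
    (hφk : ∀ x ∈ Set.Ioo a b, δ ≤ |iteratedDerivWithin k φ (Set.Ioo a b) x|)
    (η : ℝ → ℝ)
    (hη1 : ∀ x ∈ Set.Ioo a b, DifferentiableAt ℝ η x)
    (hη2 : ∀ x ∈ Set.Ioo a b, HasDerivAt (deriv η) 0 x)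
    (ψ : ℝ → ℂ)
    (hψc : ContinuousOn ψ (Set.Icc a b))
    (hψd : ∀ x ∈ Set.Ioo a b, DifferentiableAt ℝ ψ x)
    (hψd' : ContinuousOn (deriv ψ) (Set.Ioo a b))
    (hψint : IntegrableOn (deriv ψ) (Set.Ioo a b)) :
    ∀ l : ℝ, l ≠ 0 →
      ‖∫ x in a..b, Complex.exp (Complex.I * ((l * φ x + η x : ℝ) : ℂ)) * ψ x‖
        ≤ (5 * 2 ^ (k - 1) - 2 : ℝ) * δ ^ (-(1 / (k : ℝ)))
            * (‖ψ a‖ + ∫ x in a..b, ‖deriv ψ x‖) * |l| ^ (-(1 / (k : ℝ))) := by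
  intro l hl
  refine (van_der_corput_affine_phase_general hk hab.le hδ
    (fun j hj x hx => differentiableAt_iteratedDeriv_of_contDiffOn isOpen_Ioo hφ hj hx)
    (fun x hx => (hφk x hx).trans_eq <| by rw [iteratedDerivWithin_of_isOpen isOpen_Ioo hx])
    (fun j _ x hx =>
      differentiableAt_iteratedDeriv_of_hasDerivAt_deriv_zero isOpen_Ioo hη1 hη2 j hx)
    (iteratedDeriv_eqOn_zero_of_hasDerivAt_deriv_zero isOpen_Ioo hη2 hk) hψc
    (fun x hx => (hψd x hx).hasDerivAt)
    ((intervalIntegrable_iff_integrableOn_Ioo_of_le hab.le).2 hψint) hl).trans ?_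
  have hψ0 : 0 ≤ ∫ x in a..b, ‖deriv ψ x‖ :=
    intervalIntegral.integral_nonneg hab.le fun _ _ => norm_nonneg _
  have hC := two_pow_succ_le_five_mul_two_pow_pred (k := k) (by omega)
  gcongr
end

section
/- Let a < b be real numbers and δ > 0. Suppose φ : ℝ → ℝ is real-analytic on an open neighborhood of [a, b] and satisfies |φ''(x)| + |φ'''(x)| ≥ δ for all x ∈ [a, b], and suppose ψ : [a, b] → ℂ is continuously differentiable. Then there exists a constant C > 0 (depending on φ, ψ, and δ) such that for every real λ with |λ| ≥ 1 and every c ∈ ℝ, | ∫_a^b e^{i(λφ(x) + c x)} ψ(x) dx | ≤ C |λ|^{−1/3}. -/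
open scoped ENNReal
open MeasureTheory intervalIntegral

open Set Filter Topology

/-! If the `k`-th derivative of a real phase `f` is at least `μ` in absolute value, then
`∫ e^{i f}` is at most a constant `C k` times `μ ^ (-1 / k)` (van der Corput). For `k ≥ 2` the
hypothesis is insensitive to adding a linear term to `f`, and multiplying `f` by `l` multiplies `μ`
by `|l|`. The proof is by induction on `k`: if the derivative of `g` has size at least `μ`, then
`|g x| ≥ μ * |x - z|` for a suitable centre `z`; the interval of radius `h` about `z` contributes at
most `2 * h`, and off it the previous order applies with lower bound `μ * h`.

If at each point of `[a, b]` some derivative of order between `2` and `k` is nonzero, this gives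
the rate `|l| ^ (-1 / k)` near each point, uniformly in the linear term. Being joined by an integral
with this decay is an equivalence relation between points, so connectedness and compactness of
`[a, b]` make the local bounds global. The amplitude is inserted last, by integrating by parts
against the primitive of the oscillating factor. -/

/-- The oscillating factor `e^{i f(x)}` with real phase `f`: the integrand of an oscillatory
integral of constant amplitude. -/
noncomputable def oscExp (f : ℝ → ℝ) (x : ℝ) : ℂ := Complex.exp (Complex.I * (f x : ℂ))

lemma norm_oscExp (f : ℝ → ℝ) (x : ℝ) : ‖oscExp f x‖ = 1 := by
  rw [oscExp, mul_comm, Complex.norm_exp_ofReal_mul_I]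

lemma continuousOn_oscExp {f : ℝ → ℝ} {s : Set ℝ} (hf : ContinuousOn f s) :
    ContinuousOn (oscExp f) s := by
  unfold oscExp
  fun_prop

lemma hasDerivWithinAt_oscExp {f : ℝ → ℝ} {f' x : ℝ} {s : Set ℝ}
    (hf : HasDerivWithinAt f f' s x) :
    HasDerivWithinAt (oscExp f) (oscExp f x * (Complex.I * f')) s x :=
  (hf.ofReal_comp.const_mul Complex.I).cexp

section Amplitude

variable {E : Type*} [NormedAddCommGroup E] [NormedSpace ℂ E] [CompleteSpace E]

lemma integral_smul_eq_sub_integral_primitive_smul {g : ℝ → ℂ} {ψ ψ' : ℝ → E} {a b : ℝ}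
    (hab : a ≤ b) (hg : ContinuousOn g (Icc a b))
    (hψ : ∀ x ∈ Icc a b, HasDerivWithinAt ψ (ψ' x) (Icc a b) x)
    (hψ' : IntervalIntegrable ψ' volume a b) :
    ∫ x in a..b, g x • ψ x =
      (∫ x in a..b, g x) • ψ b - ∫ x in a..b, (∫ y in a..x, g y) • ψ' x := by
  have hgi : IntervalIntegrable g volume a b := hg.intervalIntegrable_of_Icc hab
  have hprim_cont : ContinuousOn (fun x ↦ ∫ y in a..x, g y) (uIcc a b) :=
    continuousOn_primitive_interval' hgi left_mem_uIcc
  have hψ_cont : ContinuousOn ψ (uIcc a b) := by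
    rw [uIcc_of_le hab]
    exact HasDerivWithinAt.continuousOn hψ
  have hprim : ∀ x ∈ Ioo (min a b) (max a b),
      HasDerivAt (fun x ↦ ∫ y in a..x, g y) (g x) x := fun x hx ↦ by
    rw [min_eq_left hab, max_eq_right hab] at hx
    have hnhds : Icc a b ∈ 𝓝 x := Icc_mem_nhds hx.1 hx.2
    exact integral_hasDerivAt_right
      (hg.mono (Icc_subset_Icc_right hx.2.le) |>.intervalIntegrable_of_Icc hx.1.le)
      ⟨Icc a b, hnhds, hg.aestronglyMeasurable measurableSet_Icc⟩ (hg.continuousAt hnhds)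
  have hψ_deriv : ∀ x ∈ Ioo (min a b) (max a b), HasDerivAt ψ (ψ' x) x := fun x hx ↦ by
    rw [min_eq_left hab, max_eq_right hab] at hx
    exact (hψ x (Ioo_subset_Icc_self hx)).hasDerivAt (Icc_mem_nhds hx.1 hx.2)
  simp [integral_smul_deriv_eq_deriv_smul_of_hasDerivAt hprim_cont hψ_cont hprim hψ_deriv hgi hψ']

lemma norm_integral_smul_le_of_norm_primitive_le {g : ℝ → ℂ} {ψ ψ' : ℝ → E} {a b B : ℝ}
    (hab : a ≤ b) (hg : ContinuousOn g (Icc a b))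
    (hB : ∀ x ∈ Icc a b, ‖∫ y in a..x, g y‖ ≤ B)
    (hψ : ∀ x ∈ Icc a b, HasDerivWithinAt ψ (ψ' x) (Icc a b) x)
    (hψ' : IntervalIntegrable ψ' volume a b) :
    ‖∫ x in a..b, g x • ψ x‖ ≤ B * (‖ψ b‖ + ∫ x in a..b, ‖ψ' x‖) := by
  have hbulk : ‖∫ x in a..b, (∫ y in a..x, g y) • ψ' x‖ ≤ ∫ x in a..b, B * ‖ψ' x‖ := by
    refine intervalIntegral.norm_integral_le_of_norm_le hab (ae_of_all _ fun x hx ↦ ?_)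
      (hψ'.norm.const_mul B)
    grw [norm_smul, hB x (Ioc_subset_Icc_self hx)]
  calc ‖∫ x in a..b, g x • ψ x‖
      ≤ ‖(∫ x in a..b, g x) • ψ b‖ + ‖∫ x in a..b, (∫ y in a..x, g y) • ψ' x‖ := by
        rw [integral_smul_eq_sub_integral_primitive_smul hab hg hψ hψ']
        exact norm_sub_le _ _
    _ ≤ B * ‖ψ b‖ + ∫ x in a..b, B * ‖ψ' x‖ := by
        grw [norm_smul, hB b (right_mem_Icc.2 hab), hbulk]
    _ = B * (‖ψ b‖ + ∫ x in a..b, ‖ψ' x‖) := by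
        rw [intervalIntegral.integral_const_mul, mul_add]

end Amplitude

lemma integral_abs_deriv_eq_abs_sub {q q' : ℝ → ℝ} {a b : ℝ} (hab : a ≤ b)
    (hq : ∀ x ∈ Icc a b, HasDerivWithinAt q (q' x) (Icc a b) x)
    (hq' : IntervalIntegrable q' volume a b)
    (hsign : (∀ x ∈ Icc a b, 0 ≤ q' x) ∨ ∀ x ∈ Icc a b, q' x ≤ 0) :
    ∫ x in a..b, |q' x| = |q b - q a| := by
  have hftc : ∫ x in a..b, q' x = q b - q a :=
    integral_eq_sub_of_hasDerivAt_of_le hab (HasDerivWithinAt.continuousOn hq)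
      (fun x hx ↦ (hq x (Ioo_subset_Icc_self hx)).hasDerivAt (Icc_mem_nhds hx.1 hx.2)) hq'
  rw [← hftc]
  rcases hsign with hpos | hneg
  · rw [abs_of_nonneg (integral_nonneg hab hpos)]
    exact integral_congr fun x hx ↦ abs_of_nonneg (hpos x (uIcc_of_le hab ▸ hx))
  · rw [← abs_neg, ← intervalIntegral.integral_neg,
      abs_of_nonneg (integral_nonneg hab fun x hx ↦ neg_nonneg.2 (hneg x hx))]
    exact integral_congr fun x hx ↦ abs_of_nonpos (hneg x (uIcc_of_le hab ▸ hx))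

lemma norm_integral_deriv_mul_oscExp_le_two {f f' : ℝ → ℝ} {u v : ℝ} (huv : u ≤ v)
    (hf : ∀ x ∈ Icc u v, HasDerivWithinAt f (f' x) (Icc u v) x)
    (hf' : ContinuousOn f' (Icc u v)) :
    ‖∫ x in u..v, (f' x : ℂ) * oscExp f x‖ ≤ 2 := by
  have hosc : ContinuousOn (oscExp f) (Icc u v) :=
    continuousOn_oscExp (HasDerivWithinAt.continuousOn hf)
  have hftc : ∫ x in u..v, (f' x : ℂ) * oscExp f x =
      -Complex.I * oscExp f v - -Complex.I * oscExp f u := by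
    refine integral_eq_sub_of_hasDerivAt_of_le (f := fun x ↦ -Complex.I * oscExp f x) huv
      (by fun_prop) (fun x hx ↦ ?_) (ContinuousOn.intervalIntegrable_of_Icc huv (by fun_prop))
    have hx' := hasDerivWithinAt_oscExp (hf x (Ioo_subset_Icc_self hx))
    refine ((hx'.hasDerivAt (Icc_mem_nhds hx.1 hx.2)).const_mul (-Complex.I)).congr_deriv ?_
    linear_combination -(oscExp f x * f' x) * Complex.I_mul_I
  rw [hftc]
  refine (norm_sub_le _ _).trans_eq ?_
  norm_num [norm_oscExp]

lemma norm_integral_oscExp_le_of_le_abs_deriv {f f' f'' : ℝ → ℝ} {u v μ : ℝ}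
    (huv : u ≤ v) (hμ : 0 < μ)
    (hf : ∀ x ∈ Icc u v, HasDerivWithinAt f (f' x) (Icc u v) x)
    (hf' : ∀ x ∈ Icc u v, HasDerivWithinAt f' (f'' x) (Icc u v) x)
    (hf'' : ContinuousOn f'' (Icc u v))
    (hsign : (∀ x ∈ Icc u v, 0 ≤ f'' x) ∨ ∀ x ∈ Icc u v, f'' x ≤ 0)
    (hlow : ∀ x ∈ Icc u v, μ ≤ |f' x|) :
    ‖∫ x in u..v, oscExp f x‖ ≤ 6 * μ⁻¹ := by
  have hne : ∀ x ∈ Icc u v, f' x ≠ 0 := fun x hx ↦ abs_pos.1 (hμ.trans_le (hlow x hx))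
  have hf'_cont : ContinuousOn f' (Icc u v) := HasDerivWithinAt.continuousOn hf'
  have hosc : ContinuousOn (oscExp f) (Icc u v) :=
    continuousOn_oscExp (HasDerivWithinAt.continuousOn hf)
  have hinv : ∀ x ∈ Icc u v, |(f' x)⁻¹| ≤ μ⁻¹ := fun x hx ↦ by
    rw [abs_inv]
    exact inv_anti₀ hμ (hlow x hx)
  have hinv_deriv : ∀ x ∈ Icc u v,
      HasDerivWithinAt (fun y ↦ (f' y)⁻¹) (-f'' x / f' x ^ 2) (Icc u v) x :=
    fun x hx ↦ (hf' x hx).fun_inv (hne x hx)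
  have hinv_int : IntervalIntegrable (fun x ↦ -f'' x / f' x ^ 2) volume u v :=
    (hf''.neg.div (hf'_cont.pow 2) fun x hx ↦ pow_ne_zero 2 (hne x hx)).intervalIntegrable_of_Icc
      huv
  have hvar : ∫ x in u..v, |-f'' x / f' x ^ 2| = |(f' v)⁻¹ - (f' u)⁻¹| := by
    refine integral_abs_deriv_eq_abs_sub huv hinv_deriv hinv_int (hsign.symm.imp ?_ ?_)
    · exact fun hneg x hx ↦ div_nonneg (neg_nonneg.2 (hneg x hx)) (sq_nonneg _)
    · exact fun hpos x hx ↦ div_nonpos_of_nonpos_of_nonneg (neg_nonpos.2 (hpos x hx)) (sq_nonneg _)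
  have hv := hinv v (right_mem_Icc.2 huv)
  have hu := hinv u (left_mem_Icc.2 huv)
  calc ‖∫ x in u..v, oscExp f x‖
      = ‖∫ x in u..v, ((f' x : ℂ) * oscExp f x) • (((f' x)⁻¹ : ℝ) : ℂ)‖ := by
        congr 1
        refine integral_congr fun x hx ↦ ?_
        have hx0 : (f' x : ℂ) ≠ 0 := by exact_mod_cast hne x (uIcc_of_le huv ▸ hx)
        simp only [smul_eq_mul, Complex.ofReal_inv]
        field_simp
    _ ≤ 2 * (‖(((f' v)⁻¹ : ℝ) : ℂ)‖ + ∫ x in u..v, ‖((-f'' x / f' x ^ 2 : ℝ) : ℂ)‖) := by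
        refine norm_integral_smul_le_of_norm_primitive_le huv (by fun_prop) (fun x hx ↦ ?_)
          (fun x hx ↦ (hinv_deriv x hx).ofReal_comp) ⟨hinv_int.1.ofReal, hinv_int.2.ofReal⟩
        have hsub : Icc u x ⊆ Icc u v := Icc_subset_Icc_right hx.2
        exact norm_integral_deriv_mul_oscExp_le_two hx.1
          (fun y hy ↦ (hf y (hsub hy)).mono hsub) (hf'_cont.mono hsub)
    _ = 2 * (|(f' v)⁻¹| + |(f' v)⁻¹ - (f' u)⁻¹|) := by
        simp only [Complex.norm_real, Real.norm_eq_abs, hvar]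
    _ ≤ 6 * μ⁻¹ := by
        linarith [abs_sub (f' v)⁻¹ (f' u)⁻¹]

lemma mul_abs_sub_le_abs_sub_of_le_abs_deriv {g g' : ℝ → ℝ} {s : Set ℝ} {μ x y : ℝ}
    [s.OrdConnected] (hg : ∀ t ∈ s, HasDerivWithinAt g (g' t) s t) (hμ : ∀ t ∈ s, μ ≤ |g' t|)
    (hx : x ∈ s) (hy : y ∈ s) : μ * |x - y| ≤ |g x - g y| := by
  wlog hxy : x < y generalizing x y
  · rcases (not_lt.1 hxy).eq_or_lt with rfl | hyx
    · simp
    · rw [abs_sub_comm x, abs_sub_comm (g x)]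
      exact this hy hx hyx
  have hsub : Icc x y ⊆ s := Set.Icc_subset s hx hy
  obtain ⟨t, ht, hslope⟩ := exists_hasDerivAt_eq_slope g g' hxy
    (HasDerivWithinAt.continuousOn fun t ht ↦ (hg t (hsub ht)).mono hsub)
    fun t ht ↦ (hg t (hsub (Ioo_subset_Icc_self ht))).hasDerivAt
      (mem_of_superset (Icc_mem_nhds ht.1 ht.2) hsub)
  calc μ * |x - y| ≤ |g' t| * |y - x| := by
        grw [abs_sub_comm, hμ t (hsub (Ioo_subset_Icc_self ht))]
    _ = |g x - g y| := by
        rw [hslope, ← abs_mul, div_mul_cancel₀ _ (sub_ne_zero.2 hxy.ne'), abs_sub_comm]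

lemma exists_forall_mul_abs_sub_le_abs {g g' : ℝ → ℝ} {u v μ : ℝ} (huv : u ≤ v)
    (hg : ∀ x ∈ Icc u v, HasDerivWithinAt g (g' x) (Icc u v) x)
    (hμ : ∀ x ∈ Icc u v, μ ≤ |g' x|) :
    ∃ z ∈ Icc u v, ∀ x ∈ Icc u v, μ * |x - z| ≤ |g x| := by
  have hcont : ContinuousOn g (Icc u v) := HasDerivWithinAt.continuousOn hg
  obtain ⟨z, hz, hmin⟩ := isCompact_Icc.exists_isMinOn (nonempty_Icc.2 huv) hcont.abs
  refine ⟨z, hz, fun x hx ↦ (mul_abs_sub_le_abs_sub_of_le_abs_deriv hg hμ hx hz).trans ?_⟩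
  have hzx : |g z| ≤ |g x| := hmin hx
  by_cases hgz : g z = 0
  · rw [hgz, sub_zero]
  have hne : ∀ y ∈ Icc u v, g y ≠ 0 := fun y hy ↦ abs_pos.1 ((abs_pos.2 hgz).trans_le (hmin hy))
  rcases isPreconnected_Icc.mapsTo_Ioi_or_Iio hcont hne with hpos | hneg
  · have hz0 : 0 < g z := hpos hz
    have hx0 : 0 < g x := hpos hx
    grind
  · have hz0 : g z < 0 := hneg hz
    have hx0 : g x < 0 := hneg hx
    grind

lemma norm_integral_le_of_norm_integral_off_ball_le {E : Type*} [NormedAddCommGroup E]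
    [NormedSpace ℝ E] {G : ℝ → E} {u v z h B : ℝ} (hG : IntervalIntegrable G volume u v)
    (hG1 : ∀ x ∈ Icc u v, ‖G x‖ ≤ 1) (hz : z ∈ Icc u v) (hh : 0 ≤ h) (hB : 0 ≤ B)
    (hleft : u ≤ z - h → ‖∫ x in u..(z - h), G x‖ ≤ B)
    (hright : z + h ≤ v → ‖∫ x in (z + h)..v, G x‖ ≤ B) :
    ‖∫ x in u..v, G x‖ ≤ 2 * h + 2 * B := by
  obtain ⟨p, hpu, hpz, hzp, hp⟩ :
      ∃ p, u ≤ p ∧ p ≤ z ∧ z - h ≤ p ∧ ‖∫ x in u..p, G x‖ ≤ B := by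
    rcases le_total u (z - h) with hle | hle
    · exact ⟨z - h, hle, by linarith, le_rfl, hleft hle⟩
    · exact ⟨u, le_rfl, hz.1, hle, by simpa⟩
  obtain ⟨q, hqv, hzq, hqz, hq⟩ :
      ∃ q, q ≤ v ∧ z ≤ q ∧ q ≤ z + h ∧ ‖∫ x in q..v, G x‖ ≤ B := by
    rcases le_total (z + h) v with hle | hle
    · exact ⟨z + h, hle, by linarith, le_rfl, hright hle⟩
    · exact ⟨v, le_rfl, hz.2, hle, by simpa⟩
  have hpq : p ≤ q := hpz.trans hzq
  have hmiddle : ‖∫ x in p..q, G x‖ ≤ 2 * h := by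
    calc ‖∫ x in p..q, G x‖ ≤ 1 * |q - p| :=
          norm_integral_le_of_norm_le_const fun x hx ↦
            have hx' := uIoc_of_le hpq ▸ hx
            hG1 x ⟨hpu.trans hx'.1.le, hx'.2.trans hqv⟩
      _ ≤ 2 * h := by rw [abs_of_nonneg (sub_nonneg.2 hpq)]; linarith
  have hint : ∀ {c d}, u ≤ c → c ≤ d → d ≤ v → IntervalIntegrable G volume c d :=
    fun {c d} huc hcd hdv ↦ hG.mono_set (by
      rw [uIcc_of_le hcd, uIcc_of_le (huc.trans (hcd.trans hdv))]
      exact Icc_subset_Icc huc hdv)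
  rw [← integral_add_adjacent_intervals (hint le_rfl (hpu.trans hpq) hqv)
      (hint (hpu.trans hpq) hqv le_rfl),
    ← integral_add_adjacent_intervals (hint le_rfl hpu (hpq.trans hqv)) (hint hpu hpq hqv)]
  exact norm_add₃_le.trans (by linarith)

lemma mul_rpow_rpow_neg_one_div {μ : ℝ} (hμ : 0 < μ) {k : ℕ} (hk : k ≠ 0) :
    (μ * μ ^ (-(1 / (k + 1 : ℕ) : ℝ))) ^ (-(1 / k : ℝ)) = μ ^ (-(1 / (k + 1 : ℕ) : ℝ)) := by
  have hexp : 1 + -(1 / (k + 1 : ℕ) : ℝ) = k / (k + 1 : ℕ) := by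
    push_cast
    field_simp
    ring
  have hne : (k : ℝ) / (k + 1 : ℕ) ≠ 0 := by positivity
  rw [← Real.rpow_one_add' hμ.le (hexp ▸ hne), ← Real.rpow_mul hμ.le, hexp]
  congr 1
  field_simp

lemma norm_integral_le_of_le_abs_deriv_of_subintervals {E : Type*} [NormedAddCommGroup E]
    [NormedSpace ℝ E] {G : ℝ → E} {g g' : ℝ → ℝ} {u v μ C : ℝ} {k : ℕ} (hk : k ≠ 0)
    (huv : u ≤ v) (hμ : 0 < μ) (hC : 0 ≤ C) (hG : IntervalIntegrable G volume u v)
    (hG1 : ∀ x ∈ Icc u v, ‖G x‖ ≤ 1)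
    (hg : ∀ x ∈ Icc u v, HasDerivWithinAt g (g' x) (Icc u v) x)
    (hg' : ∀ x ∈ Icc u v, μ ≤ |g' x|)
    (hsub : ∀ p q ν, p ≤ q → Icc p q ⊆ Icc u v → 0 < ν → (∀ x ∈ Icc p q, ν ≤ |g x|) →
      ‖∫ x in p..q, G x‖ ≤ C * ν ^ (-(1 / k : ℝ))) :
    ‖∫ x in u..v, G x‖ ≤ (2 + 2 * C) * μ ^ (-(1 / (k + 1 : ℕ) : ℝ)) := by
  obtain ⟨z, hz, hgz⟩ := exists_forall_mul_abs_sub_le_abs huv hg hg'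
  -- At this radius the excised ball and its complement contribute equally.
  set h : ℝ := μ ^ (-(1 / (k + 1 : ℕ) : ℝ)) with h_def
  have hh : 0 < h := Real.rpow_pos_of_pos hμ _
  have hoff : ∀ p q, p ≤ q → Icc p q ⊆ Icc u v → (∀ x ∈ Icc p q, h ≤ |x - z|) →
      ‖∫ x in p..q, G x‖ ≤ C * h := fun p q hpq hpq_sub hfar ↦ by
    rw [h_def, ← mul_rpow_rpow_neg_one_div hμ hk, ← h_def]
    refine hsub p q (μ * h) hpq hpq_sub (mul_pos hμ hh) fun x hx ↦ ?_
    grw [hfar x hx]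
    exact hgz x (hpq_sub hx)
  calc ‖∫ x in u..v, G x‖ ≤ 2 * h + 2 * (C * h) := by
        refine norm_integral_le_of_norm_integral_off_ball_le hG hG1 hz hh.le (by positivity) ?_ ?_
        · refine fun hle ↦ hoff _ _ hle (Icc_subset_Icc_right (by linarith [hz.2])) fun x hx ↦ ?_
          exact le_abs.2 (.inr (by linarith [hx.2]))
        · refine fun hle ↦ hoff _ _ hle (Icc_subset_Icc_left (by linarith [hz.1])) fun x hx ↦ ?_
          exact le_abs.2 (.inl (by linarith [hx.1]))
    _ = (2 + 2 * C) * h := by ring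

lemma hasDerivWithinAt_iteratedDerivWithin {F : Type*} [NormedAddCommGroup F] [NormedSpace ℝ F]
    {f : ℝ → F} {s : Set ℝ} {n : WithTop ℕ∞} {m : ℕ} {x : ℝ} (hs : UniqueDiffOn ℝ s)
    (hf : ContDiffOn ℝ n f s) (hm : (m : WithTop ℕ∞) < n) (hx : x ∈ s) :
    HasDerivWithinAt (iteratedDerivWithin m f s) (iteratedDerivWithin (m + 1) f s x) s x := by
  rw [iteratedDerivWithin_succ]
  exact (hf.differentiableOn_iteratedDerivWithin hm hs x hx).hasDerivWithinAt

lemma norm_integral_oscExp_le_of_le_abs_iteratedDerivWithin_one {f : ℝ → ℝ} {s : Set ℝ}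
    {u v μ : ℝ} (hs : UniqueDiffOn ℝ s) (hf : ContDiffOn ℝ 2 f s) (huv : u ≤ v)
    (hsub : Icc u v ⊆ s) (hμ : 0 < μ) (h1 : ∀ x ∈ Icc u v, μ ≤ |iteratedDerivWithin 1 f s x|)
    (h2 : ∀ x ∈ Icc u v, iteratedDerivWithin 2 f s x ≠ 0) :
    ‖∫ x in u..v, oscExp f x‖ ≤ 6 * μ⁻¹ := by
  have h2_cont : ContinuousOn (iteratedDerivWithin 2 f s) (Icc u v) :=
    (hf.continuousOn_iteratedDerivWithin le_rfl hs).mono hsub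
  have hderiv : ∀ m : ℕ, m < 2 → ∀ x ∈ Icc u v, HasDerivWithinAt (iteratedDerivWithin m f s)
      (iteratedDerivWithin (m + 1) f s x) (Icc u v) x := fun m hm x hx ↦
    (hasDerivWithinAt_iteratedDerivWithin hs hf (by exact_mod_cast hm) (hsub hx)).mono hsub
  refine norm_integral_oscExp_le_of_le_abs_deriv huv hμ (fun x hx ↦ ?_) (hderiv 1 one_lt_two)
    h2_cont ?_ h1
  · simpa only [iteratedDerivWithin_zero] using hderiv 0 two_pos x hx
  · exact (isPreconnected_Icc.mapsTo_Ioi_or_Iio h2_cont h2).imp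
      (fun hpos x hx ↦ (hpos hx).le) (fun hneg x hx ↦ (hneg hx).le)

lemma norm_integral_oscExp_le_of_subintervals {f : ℝ → ℝ} {s : Set ℝ} {k : ℕ} {u v μ C : ℝ}
    (hs : UniqueDiffOn ℝ s) (hk : k ≠ 0) (hf : ContDiffOn ℝ (k + 1 : ℕ) f s) (huv : u ≤ v)
    (hsub : Icc u v ⊆ s) (hμ : 0 < μ) (hC : 0 ≤ C)
    (hlow : ∀ x ∈ Icc u v, μ ≤ |iteratedDerivWithin (k + 1) f s x|)
    (hind : ∀ p q ν, p ≤ q → Icc p q ⊆ Icc u v → 0 < ν →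
      (∀ x ∈ Icc p q, ν ≤ |iteratedDerivWithin k f s x|) →
      ‖∫ x in p..q, oscExp f x‖ ≤ C * ν ^ (-(1 / k : ℝ))) :
    ‖∫ x in u..v, oscExp f x‖ ≤ (2 + 2 * C) * μ ^ (-(1 / (k + 1 : ℕ) : ℝ)) :=
  norm_integral_le_of_le_abs_deriv_of_subintervals hk huv hμ hC
    ((continuousOn_oscExp (hf.continuousOn.mono hsub)).intervalIntegrable_of_Icc huv)
    (fun x _ ↦ (norm_oscExp f x).le)
    (fun x hx ↦ (hasDerivWithinAt_iteratedDerivWithin hs hf (by exact_mod_cast k.lt_succ_self)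
      (hsub hx)).mono hsub)
    hlow hind

/-- **Van der Corput's lemma**. The constant solves `C (k + 1) = 2 + 2 * C k` with `C 1 = 6`. -/
theorem norm_integral_oscExp_le_of_le_abs_iteratedDerivWithin {f : ℝ → ℝ} {s : Set ℝ} {k : ℕ}
    {u v μ : ℝ} (hs : UniqueDiffOn ℝ s) (hk : 2 ≤ k) (hf : ContDiffOn ℝ k f s) (huv : u ≤ v)
    (hsub : Icc u v ⊆ s) (hμ : 0 < μ) (hlow : ∀ x ∈ Icc u v, μ ≤ |iteratedDerivWithin k f s x|) :
    ‖∫ x in u..v, oscExp f x‖ ≤ (2 ^ (k + 2) - 2) * μ ^ (-(1 / k : ℝ)) := by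
  induction k, hk using Nat.le_induction generalizing u v μ with
  | base =>
    refine (norm_integral_oscExp_le_of_subintervals (C := 6) hs one_ne_zero hf huv hsub hμ
      (by norm_num) hlow fun p q ν hpq hpq_sub hν h1 ↦ ?_).trans (by norm_num)
    simpa [Real.rpow_neg_one] using norm_integral_oscExp_le_of_le_abs_iteratedDerivWithin_one hs hf
      hpq (hpq_sub.trans hsub) hν h1 fun x hx ↦ abs_pos.1 (hμ.trans_le (hlow x (hpq_sub hx)))
  | succ k hk ih =>
    have hC : (0 : ℝ) ≤ 2 ^ (k + 2) - 2 :=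
      sub_nonneg.2 (le_self_pow₀ one_le_two (by lia))
    refine (norm_integral_oscExp_le_of_subintervals (k := k) hs (by lia) hf huv hsub hμ hC hlow
      fun p q ν hpq hpq_sub hν hlow' ↦ ?_).trans_eq (by ring)
    exact ih (hf.of_le (by exact_mod_cast k.le_succ)) hpq (hpq_sub.trans hsub) hν hlow'

lemma iteratedDerivWithin_const_mul_add_const_mul_id {f : ℝ → ℝ} {s : Set ℝ} {k : ℕ} {x : ℝ}
    (hs : UniqueDiffOn ℝ s) (hk : 2 ≤ k) (hf : ContDiffOn ℝ k f s) (hx : x ∈ s) (l c : ℝ) :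
    iteratedDerivWithin k (fun y ↦ l * f y + c * y) s x = l * iteratedDerivWithin k f s x := by
  rw [iteratedDerivWithin_fun_add hx hs (contDiffWithinAt_const.mul (hf x hx)) (by fun_prop),
    iteratedDerivWithin_const_mul_field, iteratedDerivWithin_const_mul_field,
    iteratedDerivWithin_fun_id hx hs, if_neg (by lia), if_neg (by lia), mul_zero, add_zero]

lemma exists_forall_dist_le_mul_of_eventually {ι X E : Type*} [TopologicalSpace X]
    [PseudoMetricSpace E] {s : Set X} {Φ : ι → X → E} {w : ι → ℝ} {x₀ : X}
    (hs : IsCompact s) (hs' : IsPreconnected s) (hw : ∀ i, 0 ≤ w i)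
    (hloc : ∀ x ∈ s, ∃ C : ℝ, ∀ᶠ y in 𝓝[s] x, ∀ i, dist (Φ i x) (Φ i y) ≤ C * w i)
    (hx₀ : x₀ ∈ s) :
    ∃ C : ℝ, ∀ y ∈ s, ∀ i, dist (Φ i x₀) (Φ i y) ≤ C * w i := by
  have hpoint : ∀ x ∈ s, ∃ C : ℝ, ∀ i, dist (Φ i x₀) (Φ i x) ≤ C * w i := fun x hx ↦ by
    refine hs'.induction₂ (fun x y ↦ ∃ C : ℝ, ∀ i, dist (Φ i x) (Φ i y) ≤ C * w i)
      (fun z hz ↦ ?_) ?_ ?_ hx₀ hx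
    · obtain ⟨C, hC⟩ := hloc z hz
      exact hC.mono fun y hy ↦ ⟨C, hy⟩
    · rintro x y z - - - ⟨C, hC⟩ ⟨D, hD⟩
      exact ⟨C + D, fun i ↦ (dist_triangle _ _ _).trans (by linarith [hC i, hD i])⟩
    · rintro x y - - ⟨C, hC⟩
      exact ⟨C, fun i ↦ dist_comm (Φ i x) (Φ i y) ▸ hC i⟩
  refine hs.induction_on (p := fun t ↦ ∃ C : ℝ, ∀ y ∈ t, ∀ i, dist (Φ i x₀) (Φ i y) ≤ C * w i)
    (by simp) (fun t t' htt' ⟨C, hC⟩ ↦ ⟨C, fun y hy ↦ hC y (htt' hy)⟩) ?_ fun x hx ↦ ?_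
  · rintro t t' ⟨C, hC⟩ ⟨D, hD⟩
    refine ⟨max C D, fun y hy i ↦ ?_⟩
    rcases hy with hy | hy
    · grw [hC y hy i, ← le_max_left C D]
      exact hw i
    · grw [hD y hy i, ← le_max_right C D]
      exact hw i
  · obtain ⟨C, hC⟩ := hpoint x hx
    obtain ⟨D, hD⟩ := hloc x hx
    exact ⟨_, hD, C + D, fun y hy i ↦ (dist_triangle _ (Φ i x) _).trans
      (by linarith [hC i, hy i])⟩

lemma norm_integral_oscExp_linear_perturbation_le {φ : ℝ → ℝ} {s : Set ℝ} {j : ℕ} {u v μ l : ℝ}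
    (hs : UniqueDiffOn ℝ s) (hj : 2 ≤ j) (hφ : ContDiffOn ℝ j φ s) (huv : u ≤ v)
    (hsub : Icc u v ⊆ s) (hμ : 0 < μ) (hl : l ≠ 0)
    (hlow : ∀ x ∈ Icc u v, μ ≤ |iteratedDerivWithin j φ s x|) (c : ℝ) :
    ‖∫ x in u..v, oscExp (fun y ↦ l * φ y + c * y) x‖ ≤
      (2 ^ (j + 2) - 2) * μ ^ (-(1 / j : ℝ)) * |l| ^ (-(1 / j : ℝ)) := by
  rw [mul_assoc, mul_comm (μ ^ _), ← Real.mul_rpow (abs_nonneg l) hμ.le]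
  refine norm_integral_oscExp_le_of_le_abs_iteratedDerivWithin hs hj (by fun_prop) huv hsub
    (by positivity) fun x hx ↦ ?_
  rw [iteratedDerivWithin_const_mul_add_const_mul_id hs hj hφ (hsub hx), abs_mul]
  grw [hlow x hx]

lemma exists_eventually_norm_integral_oscExp_le {φ : ℝ → ℝ} {s : Set ℝ} {j k : ℕ} {x : ℝ}
    [s.OrdConnected] (hs : UniqueDiffOn ℝ s) (hj : 2 ≤ j) (hjk : j ≤ k) (hφ : ContDiffOn ℝ j φ s)
    (hx : x ∈ s) (hne : iteratedDerivWithin j φ s x ≠ 0) :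
    ∃ C : ℝ, ∀ᶠ y in 𝓝[s] x, ∀ l : ℝ, 1 ≤ |l| → ∀ c : ℝ,
      ‖∫ t in x..y, oscExp (fun t ↦ l * φ t + c * t) t‖ ≤ C * |l| ^ (-(1 / k : ℝ)) := by
  set μ : ℝ := |iteratedDerivWithin j φ s x| / 2
  have hμ : 0 < μ := by positivity
  have hlow : ∀ᶠ t in 𝓝[s] x, μ ≤ |iteratedDerivWithin j φ s t| :=
    ((hφ.continuousOn_iteratedDerivWithin le_rfl hs).abs x hx).eventually_const_le
      (half_lt_self (abs_pos.2 hne))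
  have hC : (0 : ℝ) ≤ 2 ^ (j + 2) - 2 :=
    sub_nonneg.2 (le_self_pow₀ one_le_two (by lia))
  refine ⟨(2 ^ (j + 2) - 2) * μ ^ (-(1 / j : ℝ)), ?_⟩
  have hIcc : Tendsto (fun y ↦ uIcc x y) (𝓝[s] x) (𝓝[s] x).smallSets :=
    (tendsto_const_nhdsWithin hx).uIcc tendsto_id
  filter_upwards [hIcc.eventually (eventually_smallSets_forall.2 hlow), self_mem_nhdsWithin]
    with y hy hys l hl c
  rw [← intervalIntegral.norm_integral_min_max]
  calc _ ≤ (2 ^ (j + 2) - 2) * μ ^ (-(1 / j : ℝ)) * |l| ^ (-(1 / j : ℝ)) :=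
        norm_integral_oscExp_linear_perturbation_le hs hj hφ min_le_max
          (OrdConnected.uIcc_subset ‹_› hx hys) hμ (abs_pos.1 (one_pos.trans_le hl)) hy c
    _ ≤ _ := by
        gcongr

theorem exists_forall_norm_integral_oscExp_le {φ : ℝ → ℝ} {a b : ℝ} {k : ℕ} (hab : a < b)
    (hφ : ContDiffOn ℝ k φ (Icc a b))
    (hne : ∀ x ∈ Icc a b, ∃ j, 2 ≤ j ∧ j ≤ k ∧ iteratedDerivWithin j φ (Icc a b) x ≠ 0) :
    ∃ C : ℝ, ∀ l : ℝ, 1 ≤ |l| → ∀ c : ℝ, ∀ x ∈ Icc a b,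
      ‖∫ t in a..x, oscExp (fun t ↦ l * φ t + c * t) t‖ ≤ C * |l| ^ (-(1 / k : ℝ)) := by
  have hφ_cont : ContinuousOn φ (Icc a b) := hφ.continuousOn
  have hint : ∀ l c x, x ∈ Icc a b →
      IntervalIntegrable (oscExp fun t ↦ l * φ t + c * t) volume a x := fun l c x hx ↦
    have hosc := continuousOn_oscExp (f := fun t ↦ l * φ t + c * t) (s := Icc a b) (by fun_prop)
    (hosc.mono (Icc_subset_Icc_right hx.2)).intervalIntegrable_of_Icc hx.1
  let Φ (i : {l : ℝ // 1 ≤ |l|} × ℝ) (x : ℝ) : ℂ :=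
    ∫ t in a..x, oscExp (fun t ↦ i.1 * φ t + i.2 * t) t
  have hloc : ∀ x ∈ Icc a b, ∃ C : ℝ, ∀ᶠ y in 𝓝[Icc a b] x, ∀ i,
      dist (Φ i x) (Φ i y) ≤ C * |(i.1 : ℝ)| ^ (-(1 / k : ℝ)) := fun x hx ↦ by
    obtain ⟨j, hj, hjk, hjx⟩ := hne x hx
    obtain ⟨C, hC⟩ := exists_eventually_norm_integral_oscExp_le (uniqueDiffOn_Icc hab) hj hjk
      (hφ.of_le (by exact_mod_cast hjk)) hx hjx
    refine ⟨C, ?_⟩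
    filter_upwards [hC, self_mem_nhdsWithin] with y hy hys i
    rw [dist_comm, dist_eq_norm, integral_interval_sub_left (hint _ _ y hys) (hint _ _ x hx)]
    exact hy i.1 i.1.2 i.2
  obtain ⟨C, hC⟩ := exists_forall_dist_le_mul_of_eventually isCompact_Icc isPreconnected_Icc
    (fun i ↦ by positivity) hloc (left_mem_Icc.2 hab.le)
  exact ⟨C, fun l hl c x hx ↦ by simpa [Φ] using hC x hx (⟨l, hl⟩, c)⟩

theorem oscillatory_integral_third_root_decay_general {E : Type*} [NormedAddCommGroup E]
    [NormedSpace ℂ E] [CompleteSpace E] {a b : ℝ} (hab : a < b) {k : ℕ} {φ : ℝ → ℝ}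
    (hφ : ContDiffOn ℝ k φ (Icc a b))
    (hne : ∀ x ∈ Icc a b, ∃ j, 2 ≤ j ∧ j ≤ k ∧ iteratedDerivWithin j φ (Icc a b) x ≠ 0)
    {ψ : ℝ → E} (hψ : ContDiffOn ℝ 1 ψ (Icc a b)) :
    ∃ C > 0, ∀ l : ℝ, 1 ≤ |l| → ∀ c : ℝ,
      ‖∫ x in a..b, Complex.exp (Complex.I * ((l * φ x + c * x : ℝ) : ℂ)) • ψ x‖
        ≤ C * |l| ^ (-(1 / k : ℝ)) := by
  obtain ⟨C, hC⟩ := exists_forall_norm_integral_oscExp_le hab hφ hne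
  set M : ℝ := ‖ψ b‖ + ∫ x in a..b, ‖derivWithin ψ (Icc a b) x‖
  refine ⟨max (C * M) 1, by positivity, fun l hl c ↦ ?_⟩
  have hψ_deriv : ∀ x ∈ Icc a b,
      HasDerivWithinAt ψ (derivWithin ψ (Icc a b) x) (Icc a b) x := fun x hx ↦
    (hψ.differentiableOn one_ne_zero x hx).hasDerivWithinAt
  have hψ_int : IntervalIntegrable (derivWithin ψ (Icc a b)) volume a b :=
    (hψ.continuousOn_derivWithin (uniqueDiffOn_Icc hab) le_rfl).intervalIntegrable_of_Icc hab.le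
  have hosc : ContinuousOn (oscExp fun x ↦ l * φ x + c * x) (Icc a b) :=
    have hφ_cont := hφ.continuousOn
    continuousOn_oscExp (by fun_prop)
  calc _ ≤ C * |l| ^ (-(1 / k : ℝ)) * M :=
        norm_integral_smul_le_of_norm_primitive_le hab.le hosc (hC l hl c) hψ_deriv hψ_int
    _ = C * M * |l| ^ (-(1 / k : ℝ)) := by ring
    _ ≤ max (C * M) 1 * |l| ^ (-(1 / k : ℝ)) := by
        gcongr
        exact le_max_left _ _

lemma exists_iteratedDerivWithin_ne_zero_of_add_abs_pos {φ : ℝ → ℝ} {s : Set ℝ} {x : ℝ}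
    (hs : UniqueDiffOn ℝ s) (hφ : ContDiffAt ℝ 3 φ x) (hx : x ∈ s)
    (h : 0 < |iteratedDeriv 2 φ x| + |iteratedDeriv 3 φ x|) :
    ∃ j, 2 ≤ j ∧ j ≤ 3 ∧ iteratedDerivWithin j φ s x ≠ 0 := by
  by_contra! hzero
  have h2 := hzero 2 le_rfl (by lia)
  have h3 := hzero 3 (by lia) le_rfl
  rw [iteratedDerivWithin_eq_iteratedDeriv hs (hφ.of_le (by norm_num)) hx] at h2
  rw [iteratedDerivWithin_eq_iteratedDeriv hs hφ hx] at h3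
  simp [h2, h3] at h

/-- **Key oscillatory-integral estimate at the rate `|λ|^{-1/3}`.**
If `φ` is real-analytic on a neighborhood of `[a,b]` with `|φ''| + |φ'''| ≥ δ > 0` on `[a,b]`
and `ψ` is `C¹` on `[a,b]`, then there is `C > 0` such that for all `|λ| ≥ 1` and all `c ∈ ℝ`,
`|∫_a^b e^{i(λφ(x) + cx)} ψ(x) dx| ≤ C |λ|^{-1/3}`. -/
theorem oscillatory_integral_third_root_decay
    (a b : ℝ) (hab : a < b) (δ : ℝ) (hδ : 0 < δ)
    (φ : ℝ → ℝ) (hφ : AnalyticOnNhd ℝ φ (Set.Icc a b))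
    (hφ23 : ∀ x ∈ Set.Icc a b, δ ≤ |iteratedDeriv 2 φ x| + |iteratedDeriv 3 φ x|)
    (ψ : ℝ → ℂ) (hψ : ContDiffOn ℝ 1 ψ (Set.Icc a b)) :
    ∃ C > 0, ∀ l : ℝ, 1 ≤ |l| → ∀ c : ℝ,
      ‖∫ x in a..b, Complex.exp (Complex.I * ((l * φ x + c * x : ℝ) : ℂ)) * ψ x‖
        ≤ C * |l| ^ (-(1 / 3 : ℝ)) := by
  have hne : ∀ x ∈ Icc a b, ∃ j, 2 ≤ j ∧ j ≤ 3 ∧ iteratedDerivWithin j φ (Icc a b) x ≠ 0 :=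
    fun x hx ↦ exists_iteratedDerivWithin_ne_zero_of_add_abs_pos (uniqueDiffOn_Icc hab)
      (hφ x hx).contDiffAt hx (hδ.trans_le (hφ23 x hx))
  simpa using oscillatory_integral_third_root_decay_general hab
    (hφ.contDiffOn (uniqueDiffOn_Icc hab)) hne hψ
end
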